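/- arXiv:2109.04944 — 2 statements merged into one kernel-verified Lean document; each statement's English description precedes it below -/
import Mathlib

section
/- For every ε > 0 there exist δ = δ(ε) > 0 and n₀ = n₀(ε), where 1/δ and n₀ are bounded by a polynomial in 1/ε (i.e., there is an absolute constant C > 0 with δ = ε^C / C and n₀ = C·ε^{-C}), such that the following holds. Let H be a 3-uniform hypergraph on n ≥ n₀ vertices which contains fewer than δ·n⁴ induced copies of D₂. Then there is a 3-uniform hypergraph H' on the same vertex set that is induced D₂-free and whose edge set differs from that of H in at most ε·n³ triples. -/
open Finset

/-- The number of induced copies of `D₂` (4 vertices spanning exactly 2 edges) in the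
3-uniform hypergraph with edge set `E`. -/
def inducedD2Count {V : Type} [Fintype V] [DecidableEq V] (E : Finset (Finset V)) : ℕ :=
  (((Finset.univ : Finset V).powersetCard 4).filter
    (fun S => (E.filter (fun e => e ⊆ S)).card = 2)).card

/-- A 3-uniform hypergraph is induced `D₂`-free if no 4 vertices span exactly 2 edges. -/
def InducedD2Free {V : Type} [Fintype V] [DecidableEq V] (E : Finset (Finset V)) : Prop :=
  ∀ S : Finset V, S.card = 4 → (E.filter (fun e => e ⊆ S)).card ≠ 2

section RemovalGraph
open scoped Classical
set_option linter.unusedVariables false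

namespace D2R

variable {S : Type} 

def P4free (G : SimpleGraph S) : Prop :=
  ∀ a b c d, G.Adj a b → G.Adj b c → G.Adj c d → ¬ G.Adj a c → ¬ G.Adj b d → ¬ G.Adj a d → False

def Splt (G : SimpleGraph S) (W : Finset S) : Prop :=
  ∃ A ⊆ W, A.Nonempty ∧ (W \ A).Nonempty ∧ ∀ a ∈ A, ∀ b ∈ W \ A, ¬ G.Adj a b

lemma P4free.compl {G : SimpleGraph S} (h : P4free G) : P4free Gᶜ := by
  intro a b c d hab hbc hcd hac hbd had
  have n1 : a ≠ c := by rintro rfl; exact had hcd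
  have n2 : b ≠ d := by rintro rfl; exact had hab
  have n3 : a ≠ d := by rintro rfl; exact hac hcd.symm
  simp only [SimpleGraph.compl_adj, not_and, not_not] at *
  exact h c a d b (hac n1).symm (had n3) (hbd n2).symm (fun h => hcd.2 h) (fun h => hab.2 h)
    (fun h => hbc.2 h.symm)

lemma comp_exists (G : SimpleGraph S) (W : Finset S) (w : S) (hw : w ∈ W) :
    ∃ C ⊆ W, w ∈ C ∧ (∀ a ∈ C, ∀ b ∈ W \ C, ¬ G.Adj a b) ∧ ¬ Splt G C := by
  have hne : (W.powerset.filter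
      (fun C => w ∈ C ∧ (∀ a ∈ C, ∀ b ∈ W \ C, ¬ G.Adj a b))).Nonempty :=
    ⟨W, by simp only [mem_filter, mem_powerset]; exact ⟨Subset.refl _, hw, fun a _ b hb => by simp at hb⟩⟩
  obtain ⟨C, hC, hmin⟩ := Finset.exists_min_image _ Finset.card hne
  simp only [mem_filter, mem_powerset] at hC hmin
  refine ⟨C, hC.1, hC.2.1, hC.2.2, ?_⟩
  have key : ∀ A ⊆ C, w ∈ A → (C \ A).Nonempty → (∀ a ∈ A, ∀ b ∈ C \ A, ¬ G.Adj a b) → False := by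
    intro A hA hwA hne' hcl
    have h1 := hmin A ⟨hA.trans hC.1, hwA, by
      intro a ha b hb
      by_cases hbC : b ∈ C
      · exact hcl a ha b (by simp_all)
      · exact hC.2.2 a (hA ha) b (by simp_all)⟩
    have h2 : A.card < C.card := by
      apply Finset.card_lt_card
      refine ⟨hA, fun h => ?_⟩
      obtain ⟨x, hx⟩ := hne'
      simp only [mem_sdiff] at hx
      exact hx.2 (h hx.1)
    omega
  rintro ⟨A, hA, hA1, hA2, hcl⟩
  by_cases hwA : w ∈ A
  · exact key A hA hwA hA2 hcl
  · refine key (C \ A) sdiff_subset (by simp [hwA, hC.2.1]) ?_ ?_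
    · rw [Finset.sdiff_sdiff_eq_self hA]; exact hA1
    · rw [Finset.sdiff_sdiff_eq_self hA]
      intro a ha b hb h
      exact hcl b hb a ha h.symm

lemma split_step {G : SimpleGraph S} (hG : P4free G) (W : Finset S) (hW : Splt G W) (u : S)
    (hu : u ∉ W) : Splt G (insert u W) ∨ Splt Gᶜ (insert u W) := by
  by_cases hall : ∀ w ∈ W, G.Adj u w
  · right
    obtain ⟨A, hA, ⟨a, ha⟩, -⟩ := hW
    refine ⟨{u}, by simp, by simp, ⟨a, ?_⟩, ?_⟩
    · have : a ≠ u := by rintro rfl; exact hu (hA ha)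
      simp [this, hA ha]
    · intro x hx b hb
      simp only [mem_singleton] at hx
      subst hx
      simp only [mem_sdiff, mem_insert, mem_singleton] at hb
      have := hall b (by tauto)
      simp [this]
  push Not at hall
  obtain ⟨w, hw, huw⟩ := hall
  left
  obtain ⟨C, hCW, hwC, hcl, hns⟩ := comp_exists G W w hw
  have hWC : (W \ C).Nonempty := by
    rw [sdiff_nonempty]
    intro h
    exact hns (by rwa [hCW.antisymm h])
  have huC : u ∉ C := fun h => hu (hCW h)
  by_cases h1 : ∃ c ∈ C, G.Adj u c
  · by_cases h2 : ∃ d ∈ W \ C, G.Adj u d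
    · exfalso
      obtain ⟨c, hc, huc⟩ := h1
      obtain ⟨d, hd, hud⟩ := h2
      apply hns
      refine ⟨C.filter (fun x => G.Adj u x), filter_subset _ _, ⟨c, by simp [hc, huc]⟩,
        ⟨w, by simp [hwC, huw]⟩, ?_⟩
      intro x hx y hy hxy
      simp only [mem_filter, mem_sdiff, not_and] at hx hy
      refine hG y x u d hxy.symm hx.2.symm hud (fun h => hy.2 hy.1 h.symm)
        (hcl x hx.1 d hd) (hcl y hy.1 d hd)
    · push Not at h2
      refine ⟨W \ C, sdiff_subset.trans (subset_insert _ _), hWC, ⟨u, by simp [hu]⟩, ?_⟩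
      intro a ha b hb hab
      simp only [mem_sdiff, mem_insert, not_and, not_not] at hb ha
      rcases hb.1 with rfl | hbW
      · exact h2 a (by simp [ha]) hab.symm
      · exact hcl b (hb.2 hbW) a (by simp [ha]) hab.symm
  · push Not at h1
    refine ⟨C, hCW.trans (subset_insert _ _), ⟨w, hwC⟩, ⟨u, by simp [huC]⟩, ?_⟩
    intro a ha b hb hab
    simp only [mem_sdiff, mem_insert] at hb
    rcases hb.1 with rfl | hbW
    · exact h1 a ha hab.symm
    · exact hcl a ha b (by simp [hb.2, hbW]) hab

lemma seinsche {G : SimpleGraph S} (hG : P4free G) (W : Finset S) (hW : 2 ≤ W.card) :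
    Splt G W ∨ Splt Gᶜ W := by
  induction W using Finset.induction_on with
  | empty => simp at hW
  | insert u W hu ih =>
    by_cases h2 : 2 ≤ W.card
    · rcases ih h2 with h | h
      · exact split_step hG W h u hu
      · have := split_step hG.compl W h u hu
        rw [compl_compl] at this
        exact this.symm
    · rw [card_insert_of_notMem hu] at hW
      have : W.card = 1 := by omega
      obtain ⟨w, rfl⟩ := card_eq_one.mp this
      have hne : u ≠ w := by simpa using hu
      have aux : ∀ G : SimpleGraph S, ¬ G.Adj u w → Splt G {u, w} := by
        intro G h
        refine ⟨{u}, by simp, by simp, ⟨w, by simp [hne.symm]⟩, ?_⟩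
        intro a ha b hb
        simp only [mem_sdiff, mem_insert, mem_singleton] at ha hb
        have : b = w := by tauto
        subst ha; subst this; exact h
      by_cases h : G.Adj u w
      · right; exact aux _ (by simp [h])
      · left; exact aux _ h

/-- sparse or cut -/
def Concl (G : SimpleGraph S) (R : Finset S) (a b : ℝ) : Prop :=
  ((((R ×ˢ R).filter (fun p => G.Adj p.1 p.2)).card : ℝ) ≤ R.card * (b + 4 * a)) ∨
  ∃ X Y T A : Finset S, ∃ x0 x1 y0 : S, R = X ∪ T ∪ Y ∧ Disjoint X T ∧ Disjoint X Y ∧ Disjoint T Y ∧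
    (T.card : ℝ) < a ∧ a ≤ Y.card ∧ b ≤ X.card ∧ x0 ∈ A ∧ A ⊆ X ∧ x1 ∈ X \ A ∧ y0 ∈ Y ∧
    (∀ x ∈ A, ∀ x' ∈ X \ A, G.Adj x x') ∧ (∀ y ∈ Y, ∀ x ∈ X, ¬ G.Adj y x) ∧
    (∀ t ∈ T, ∀ x ∈ X, G.Adj t x) ∧ (∀ t ∈ T, G.Adj t y0)

lemma cat_step {G : SimpleGraph S} (hG : P4free G) (R : Finset S) (a b : ℝ) (hb : 2 ≤ b)
    (ha : 0 ≤ a)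
    (W T Y : Finset S) (hR : R = W ∪ T ∪ Y) (d1 : Disjoint W T) (d2 : Disjoint W Y)
    (d3 : Disjoint T Y) (hT : ∀ t ∈ T, ∀ w ∈ W, G.Adj t w) (hY : ∀ t ∈ Y, ∀ w ∈ W, ¬ G.Adj t w)
    (cT : (T.card : ℝ) < a) (cY : (Y.card : ℝ) < a) (hS : Splt G W)
    (ih : ∀ C Y' : Finset S, C.card < W.card → 2 ≤ C.card → R = C ∪ T ∪ Y' → Disjoint C T →
      Disjoint C Y' → Disjoint T Y' → (∀ t ∈ T, ∀ w ∈ C, G.Adj t w) →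
      (∀ t ∈ Y', ∀ w ∈ C, ¬ G.Adj t w) → (Y'.card : ℝ) < a →
      Concl G R a b ∨ Concl Gᶜ R a b) : Concl G R a b ∨ Concl Gᶜ R a b := by
  by_cases hbig : ∃ C ⊆ W, (∀ x ∈ C, ∀ y ∈ W \ C, ¬ G.Adj x y) ∧ ¬ Splt G C ∧ b ≤ C.card
  · obtain ⟨C, hCW, hcl, hns, hCb⟩ := hbig
    have hC2 : 2 ≤ C.card := by exact_mod_cast hb.trans hCb
    have hWC : (W \ C).Nonempty := by
      rw [sdiff_nonempty]
      intro h
      exact hns (by rwa [hCW.antisymm h])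
    have hsp := (seinsche hG C hC2).resolve_left hns
    have hlt : C.card < W.card := card_lt_card ⟨hCW, by
      rwa [← sdiff_nonempty]⟩
    have e1 : R = C ∪ T ∪ (Y ∪ (W \ C)) := by
      rw [hR]; ext x; have := @hCW x; simp only [mem_union, mem_sdiff]; tauto
    have e2 : Disjoint C T := d1.mono_left hCW
    have e3 : Disjoint C (Y ∪ (W \ C)) :=
      disjoint_union_right.mpr ⟨d2.mono_left hCW, disjoint_sdiff⟩
    have e4 : Disjoint T (Y ∪ (W \ C)) :=
      disjoint_union_right.mpr ⟨d3, d1.symm.mono_right sdiff_subset⟩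
    have e5 : ∀ t ∈ T, ∀ w ∈ C, G.Adj t w := fun t ht w hw => hT t ht w (hCW hw)
    have e6 : ∀ t ∈ Y ∪ (W \ C), ∀ w ∈ C, ¬ G.Adj t w := by
      intro t ht w hw h
      rcases mem_union.mp ht with h' | h'
      · exact hY t h' w (hCW hw) h
      · exact hcl w hw t h' h.symm
    by_cases hYa : (((Y ∪ (W \ C)).card : ℕ) : ℝ) < a
    · exact ih C _ hlt hC2 e1 e2 e3 e4 e5 e6 hYa
    · left; right
      obtain ⟨A, hAC, ⟨x0, hx0⟩, ⟨x1, hx1⟩, hA⟩ := hsp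
      obtain ⟨y0, hy0⟩ := hWC
      refine ⟨C, Y ∪ (W \ C), T, A, x0, x1, y0, e1, e2, e3, e4, cT, not_lt.mp hYa, hCb, hx0, hAC,
        hx1, mem_union_right _ hy0, ?_, e6, e5, ?_⟩
      · intro x hx x' hx'
        have h := hA x hx x' hx'
        have hne : x ≠ x' := by rintro rfl; simp at hx'; exact hx'.2 hx
        simpa [hne] using h
      · intro t ht
        exact hT t ht y0 (mem_sdiff.mp hy0).1
  · left; left
    push Not at hbig
    have hdeg : ∀ w ∈ W, ((W.filter (fun x => G.Adj w x)).card : ℝ) ≤ b := by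
      intro w hw
      obtain ⟨C, hCW, hwC, hcl, hns⟩ := comp_exists G W w hw
      have h1 := hbig C hCW hcl hns
      refine le_trans ?_ h1.le
      norm_cast
      apply card_le_card
      intro x hx
      simp only [mem_filter] at hx
      by_contra hxC
      exact hcl w hwC x (by simp [hx.1, hxC]) hx.2
    have hcTY : ((T ∪ Y).card : ℝ) ≤ 2 * a := by
      have := card_union_le T Y
      have : ((T ∪ Y).card : ℝ) ≤ T.card + Y.card := by exact_mod_cast this
      linarith
    have hsub : (R ×ˢ R).filter (fun p => G.Adj p.1 p.2) ⊆
        ((T ∪ Y) ×ˢ R) ∪ (R ×ˢ (T ∪ Y)) ∪ (W ×ˢ W).filter (fun p => G.Adj p.1 p.2) := by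
      intro p hp
      rw [hR] at hp ⊢
      simp only [mem_filter, mem_product, mem_union] at hp ⊢
      tauto
    have hWW : (((W ×ˢ W).filter (fun p => G.Adj p.1 p.2)).card : ℝ) ≤ R.card * b := by
      have : ((W ×ˢ W).filter (fun p => G.Adj p.1 p.2)).card =
          ∑ w ∈ W, (W.filter (fun x => G.Adj w x)).card := by
        rw [card_filter, sum_product]
        simp only [card_filter]
      rw [this]
      push_cast
      calc _ ≤ ∑ w ∈ W, b := sum_le_sum hdeg
        _ = W.card * b := by simp
        _ ≤ _ := by
          gcongr
          rw [hR, union_assoc]; exact subset_union_left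
    have h1 := (card_le_card hsub).trans ((card_union_le _ _).trans
      (Nat.add_le_add_right (card_union_le _ _) _))
    have h2 : (((R ×ˢ R).filter (fun p => G.Adj p.1 p.2)).card : ℝ) ≤
        (T ∪ Y).card * R.card + R.card * (T ∪ Y).card +
          ((W ×ˢ W).filter (fun p => G.Adj p.1 p.2)).card := by
      rw [card_product, card_product] at h1
      exact_mod_cast h1
    have h3 : ((T ∪ Y).card : ℝ) * R.card ≤ 2 * a * R.card := by gcongr
    linarith

lemma cat_main (R : Finset S) (a b : ℝ) (hb : 2 ≤ b) (ha : 0 ≤ a) : ∀ (k : ℕ)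
    (G : SimpleGraph S) (_ : P4free G)
    (W T Y : Finset S) (_ : W.card ≤ k) (_ : 2 ≤ W.card) (_ : R = W ∪ T ∪ Y) (_ : Disjoint W T)
    (_ : Disjoint W Y)
    (_ : Disjoint T Y) (_ : ∀ t ∈ T, ∀ w ∈ W, G.Adj t w) (_ : ∀ t ∈ Y, ∀ w ∈ W, ¬ G.Adj t w)
    (_ : (T.card : ℝ) < a) (_ : (Y.card : ℝ) < a), Concl G R a b ∨ Concl Gᶜ R a b := by
  intro k
  induction k with
  | zero => intro G hG W T Y h1 h2; omega
  | succ k ih =>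
    intro G hG W T Y hk h2 hR d1 d2 d3 hT hY cT cY
    rcases seinsche hG W h2 with h | h
    · refine cat_step hG R a b hb ha W T Y hR d1 d2 d3 hT hY cT cY h ?_
      intro C Y' hC hC2 hR' d1' d2' d3' hT' hY' cY'
      exact ih G hG C T Y' (by omega) hC2 hR' d1' d2' d3' hT' hY' cT cY'
    · have hT2 : ∀ t ∈ T, ∀ w ∈ W, ¬ Gᶜ.Adj t w := by
        intro t ht w hw
        simp [hT t ht w hw]
      have hY2 : ∀ t ∈ Y, ∀ w ∈ W, Gᶜ.Adj t w := by
        intro t ht w hw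
        have : t ≠ w := by rintro rfl; exact disjoint_left.mp d2 hw ht
        simp [hY t ht w hw, this]
      have := cat_step hG.compl R a b hb ha W Y T (by rw [hR, union_right_comm]) d2 d1 d3.symm
        hY2 hT2 cY cT h (fun C Y' hC hC2 hR' d1' d2' d3' hT' hY' cY' =>
          ih Gᶜ hG.compl C Y Y' (by omega) hC2 hR' d1' d2' d3' hT' hY' cY cY')
      rw [compl_compl] at this
      exact this.symm

end D2R
end RemovalGraph

section RemovalHyp
open scoped Classical
set_option linter.unusedVariables false

namespace D2R

structure Hyp (V : Type) where
  r : V → V → V → Prop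
  s12 : ∀ a b c, r a b c → r b a c
  s23 : ∀ a b c, r a b c → r a c b
  ne12 : ∀ a b c, r a b c → a ≠ b

variable {V S : Type}

namespace Hyp

lemma ne23 (K : Hyp V) (a b c : V) (h : K.r a b c) : b ≠ c :=
  K.ne12 b c a (K.s23 _ _ _ (K.s12 _ _ _ h))

lemma ne13 (K : Hyp V) (a b c : V) (h : K.r a b c) : a ≠ c :=
  K.ne12 a c b (K.s23 _ _ _ h)

def compl (K : Hyp V) : Hyp V where
  r a b c := a ≠ b ∧ a ≠ c ∧ b ≠ c ∧ ¬ K.r a b c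
  s12 a b c h := ⟨h.1.symm, h.2.2.1, h.2.1, fun h' => h.2.2.2 (K.s12 _ _ _ h')⟩
  s23 a b c h := ⟨h.2.1, h.1, h.2.2.1.symm, fun h' => h.2.2.2 (K.s23 _ _ _ h')⟩
  ne12 a b c h := h.1

def comap (K : Hyp V) (f : S → V) : Hyp S where
  r a b c := K.r (f a) (f b) (f c)
  s12 a b c h := K.s12 _ _ _ h
  s23 a b c h := K.s23 _ _ _ h
  ne12 a b c h := fun h' => K.ne12 _ _ _ h (by rw [h'])

@[ext] lemma ext' {K L : Hyp V} (h : ∀ a b c, K.r a b c ↔ L.r a b c) : K = L := by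
  cases K; cases L
  congr
  funext a b c
  exact propext (h a b c)

lemma compl_compl (K : Hyp V) : K.compl.compl = K := by
  ext a b c
  have h1 := K.ne12 a b c
  have h2 := K.ne13 a b c
  have h3 := K.ne23 a b c
  simp only [compl]
  tauto

lemma comap_compl (K : Hyp V) (f : S → V) (hf : Function.Injective f) :
    K.compl.comap f = (K.comap f).compl := by
  ext a b c
  simp [compl, comap, hf.ne_iff]

def Bad (K : Hyp V) (a b c d : V) : Prop :=
  K.r a b c ∧ K.r a b d ∧ c ≠ d ∧ ¬ K.r a c d ∧ ¬ K.r b c d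

lemma bad_compl (K : Hyp V) (a b c d : V) (h : K.compl.Bad a b c d) : K.Bad c d a b := by
  have := K.s12
  have := K.s23
  have := K.ne12
  simp only [Bad, compl] at *
  grind

def link (K : Hyp V) (v : V) : SimpleGraph V where
  Adj a b := K.r v a b
  symm := ⟨fun a b h => K.s23 _ _ _ h⟩
  loopless := ⟨fun a h => K.ne23 _ _ _ h rfl⟩

lemma link_p4free (K : Hyp V) (v : V) (hfree : ∀ a b c d, ¬ K.Bad a b c d) : P4free (K.link v) := by
  intro a b c d hab hbc hcd hac hbd had
  simp only [link] at *
  have p := K.s12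
  have q := K.s23
  have n12 := K.ne12
  have nac : a ≠ c := by rintro rfl; exact had hcd
  have nbd : b ≠ d := by rintro rfl; exact had hab
  have e1 : K.r a b c := by
    by_contra h
    exact hfree v b a c ⟨q _ _ _ hab, hbc, nac, hac, fun h' => h (p _ _ _ h')⟩
  have e2 : K.r b c d := by
    by_contra h
    exact hfree v c b d ⟨q _ _ _ hbc, hcd, nbd, hbd, fun h' => h (p _ _ _ h')⟩
  have e3 : ¬ K.r a b d := by
    intro h
    refine hfree a b v d ⟨q _ _ _ (p _ _ _ hab), h, K.ne13 _ _ _ hcd, ?_, ?_⟩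
    · intro h; exact had (p _ _ _ h)
    · intro h; exact hbd (p _ _ _ h)
  have e4 : ¬ K.r a c d := by
    intro h
    refine hfree c d v a ⟨q _ _ _ (p _ _ _ hcd), q _ _ _ (p _ _ _ h), K.ne12 _ _ _ hab, ?_, ?_⟩
    · intro h; exact hac (q _ _ _ (p _ _ _ h))
    · intro h; exact had (q _ _ _ (p _ _ _ h))
  refine hfree b c a d ⟨q _ _ _ (p _ _ _ e1), e2, ?_, ?_, ?_⟩
  · rintro rfl; exact hac (q _ _ _ hcd)
  · intro h; exact e3 (p _ _ _ h)
  · intro h; exact e4 (p _ _ _ h)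

def Xp (K : Hyp V) (v x0 x1 y0 u : V) : Prop :=
  (K.r v x0 u ∨ K.r v x1 u) ∧ ¬ (K.r v x0 u ∧ K.r v y0 u)

def Yp (K : Hyp V) (v x0 x1 u : V) : Prop := u ≠ v ∧ ¬ (K.r v x0 u ∨ K.r v x1 u)

/-- good cut in the sample -/
def SGood [Fintype V] (K : Hyp V) (v x0 x1 y0 : V) (a b : ℝ) : Prop :=
  ((univ.filter (fun u => ¬ K.Xp v x0 x1 y0 u ∧ ¬ K.Yp v x0 x1 u)).card : ℝ) ≤ 2 * a ∧
  b ≤ (univ.filter (fun u => K.Xp v x0 x1 y0 u)).card ∧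
  a ≤ (univ.filter (fun u => K.Yp v x0 x1 u)).card ∧
  (∀ x x' y, K.Xp v x0 x1 y0 x → K.Xp v x0 x1 y0 x' → K.Yp v x0 x1 y → ¬ K.r x x' y) ∧
  (∀ x x' y y', K.Xp v x0 x1 y0 x → K.Xp v x0 x1 y0 x' → K.Yp v x0 x1 y → K.Yp v x0 x1 y' →
    x ≠ x' → ¬ (K.r x y y' ∧ K.r x' y y'))

lemma exact_cut [Fintype V] (K : Hyp V) (hfree : ∀ a b c d, ¬ K.Bad a b c d) (v : V) (a b : ℝ)
    (ha : 1 ≤ a) (hb : 2 ≤ b)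
    (h1 : (Fintype.card V : ℝ) * (b + 4 * a) <
      (univ.filter (fun p : V × V => K.r v p.1 p.2)).card)
    (h : Concl (K.link v) (univ.erase v) a b) : ∃ x0 x1 y0, K.SGood v x0 x1 y0 a b := by
  rcases h with h | h
  · exfalso
    have : (univ.filter (fun p : V × V => K.r v p.1 p.2)).card ≤
      (((univ.erase v) ×ˢ (univ.erase v)).filter (fun p : V × V => (K.link v).Adj p.1 p.2)).card := by
      apply card_le_card
      intro p hp
      simp only [mem_filter, mem_univ, true_and, mem_product, mem_erase, and_true] at hp ⊢
      exact ⟨⟨(K.ne12 _ _ _ hp).symm, (K.ne13 _ _ _ hp).symm⟩, hp⟩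
    have h2 : (((univ.filter (fun p : V × V => K.r v p.1 p.2)).card : ℕ) : ℝ) ≤
      (((univ.erase v) ×ˢ (univ.erase v)).filter
        (fun p : V × V => (K.link v).Adj p.1 p.2)).card := by exact_mod_cast this
    have h3 : ((univ.erase v).card : ℝ) ≤ Fintype.card V := by
      exact_mod_cast card_le_univ _
    have h4 : ((univ.erase v).card : ℝ) * (b + 4 * a) ≤ Fintype.card V * (b + 4 * a) := by
      gcongr
    linarith
  · obtain ⟨X, Y, T, A, x0, x1, y0, hR, d1, d2, d3, cT, cY, cX, hx0, hAX, hx1, hy0, hA, hY, hTX, hT0⟩ := h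
    simp only [link] at hA hY hTX hT0
    have hx0X := hAX hx0
    have hx1X := (mem_sdiff.mp hx1).1
    have p := K.s12
    have q := K.s23
    have hmem : ∀ u, u ≠ v ↔ u ∈ X ∨ u ∈ T ∨ u ∈ Y := by
      intro u
      have : u ∈ univ.erase v ↔ u ∈ X ∪ T ∪ Y := by rw [hR]
      simpa [or_assoc] using this
    have dXT : ∀ u, u ∈ X → u ∉ T := fun u hu => Finset.disjoint_left.mp d1 hu
    have dXY : ∀ u, u ∈ X → u ∉ Y := fun u hu => Finset.disjoint_left.mp d2 hu
    have dTY : ∀ u, u ∈ T → u ∉ Y := fun u hu => Finset.disjoint_left.mp d3 hu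
    have hZX : ∀ u ∈ X, K.r v x0 u ∨ K.r v x1 u := by
      intro u hu
      by_cases hA' : u ∈ A
      · right; exact q _ _ _ (hA u hA' x1 hx1)
      · left; exact hA x0 hx0 u (by simp [hu, hA'])
    have hZT : ∀ u ∈ T, K.r v x0 u := fun u hu => q _ _ _ (hTX u hu x0 hx0X)
    have hXp : ∀ u, K.Xp v x0 x1 y0 u ↔ u ∈ X := by
      intro u
      constructor
      · rintro ⟨h1, h2⟩
        have hu : u ≠ v := by
          rcases h1 with h1 | h1 <;> exact (K.ne13 _ _ _ h1).symm
        rcases (hmem u).mp hu with h | h | h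
        · exact h
        · exact absurd ⟨hZT u h, q _ _ _ (hT0 u h)⟩ h2
        · rcases h1 with h1 | h1
          · exact absurd (q _ _ _ h1) (hY u h x0 hx0X)
          · exact absurd (q _ _ _ h1) (hY u h x1 hx1X)
      · intro hu
        refine ⟨hZX u hu, fun h => hY y0 hy0 u hu h.2⟩
    have hYp : ∀ u, K.Yp v x0 x1 u ↔ u ∈ Y := by
      intro u
      constructor
      · rintro ⟨h1, h2⟩
        rcases (hmem u).mp h1 with h | h | h
        · exact absurd (hZX u h) h2
        · exact absurd (Or.inl (hZT u h)) h2
        · exact h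
      · intro hu
        refine ⟨(hmem u).mpr (Or.inr (Or.inr hu)), ?_⟩
        rintro (h | h)
        · exact hY u hu x0 hx0X (q _ _ _ h)
        · exact hY u hu x1 hx1X (q _ _ _ h)
    have F1 : ∀ x ∈ X, ∀ x' ∈ X, ∀ y ∈ Y, K.r v x x' → ¬ K.r x x' y := by
      intro x hx x' hx' y hy h h'
      refine hfree x x' v y ⟨q _ _ _ (p _ _ _ h), h', ((hmem y).mpr (by tauto)).symm, ?_, ?_⟩
      · intro h; exact hY y hy x hx (q _ _ _ (p _ _ _ h))
      · intro h; exact hY y hy x' hx' (q _ _ _ (p _ _ _ h))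
    have key : ∀ x ∈ X, ∀ x' ∈ X, ∀ w ∈ X, ∀ y ∈ Y, K.r v x w → K.r v x' w → ¬ K.r x x' y := by
      intro x hx x' hx' w hw y hy h h' hh
      by_cases hxx : K.r v x x'
      · exact F1 x hx x' hx' y hy hxx hh
      have hne := K.ne12 _ _ _ hh
      have e1 : K.r x x' w := by
        by_contra hn
        exact hfree v w x x' ⟨q _ _ _ h, q _ _ _ h', hne, hxx,
          fun g => hn (q _ _ _ (p _ _ _ g))⟩
      have hwy : w ≠ y := by rintro rfl; exact dXY _ hw hy
      refine hfree x x' w y ⟨e1, hh, hwy, ?_, ?_⟩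
      · exact F1 x hx w hw y hy h
      · exact F1 x' hx' w hw y hy h'
    have F2 : ∀ x ∈ X, ∀ x' ∈ X, ∀ y ∈ Y, ¬ K.r x x' y := by
      intro x hx x' hx' y hy
      by_cases hxA : x ∈ A
      · by_cases hxA' : x' ∈ A
        · exact key x hx x' hx' x1 hx1X y hy (hA x hxA x1 hx1) (hA x' hxA' x1 hx1)
        · exact F1 x hx x' hx' y hy (hA x hxA x' (by simp [hx', hxA']))
      · by_cases hxA' : x' ∈ A
        · exact F1 x hx x' hx' y hy (q _ _ _ (hA x' hxA' x (by simp [hx, hxA])))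
        · exact key x hx x' hx' x0 hx0X y hy (q _ _ _ (hA x0 hx0 x (by simp [hx, hxA])))
            (q _ _ _ (hA x0 hx0 x' (by simp [hx', hxA'])))
    refine ⟨x0, x1, y0, ?_, ?_, ?_, ?_, ?_⟩
    · have : univ.filter (fun u => ¬ K.Xp v x0 x1 y0 u ∧ ¬ K.Yp v x0 x1 u) ⊆ insert v T := by
        intro u hu
        simp only [mem_filter, mem_univ, true_and, hXp, hYp] at hu
        have := hmem u
        simp only [mem_insert]
        tauto
      have := (card_le_card this).trans (card_insert_le _ _)
      have : ((univ.filter (fun u => ¬ K.Xp v x0 x1 y0 u ∧ ¬ K.Yp v x0 x1 u)).card : ℝ) ≤ T.card + 1 := by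
        exact_mod_cast this
      linarith
    · simpa [hXp] using cX
    · simpa [hYp] using cY
    · intro x x' y hx hx' hy
      exact F2 x ((hXp x).mp hx) x' ((hXp x').mp hx') y ((hYp y).mp hy)
    · rintro x x' y y' hx hx' hy hy' hne ⟨h1, h2⟩
      rw [hXp] at hx hx'
      rw [hYp] at hy hy'
      refine hfree y y' x x' ⟨q _ _ _ (p _ _ _ h1) |> p _ _ _ |> p _ _ _, ?_, hne, ?_, ?_⟩
      · exact q _ _ _ (p _ _ _ h2)
      · intro h; exact F2 x hx x' hx' y hy (q _ _ _ (p _ _ _ h))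
      · intro h; exact F2 x hx x' hx' y' hy' (q _ _ _ (p _ _ _ h))

lemma exact_main [Fintype V] (K : Hyp V) (hfree : ∀ a b c d, ¬ K.Bad a b c d) (v : V) (a b : ℝ)
    (ha : 1 ≤ a) (hb : 2 ≤ b)
    (h1 : (Fintype.card V : ℝ) * (b + 4 * a) <
      (univ.filter (fun p : V × V => K.r v p.1 p.2)).card)
    (h2 : (Fintype.card V : ℝ) * (b + 4 * a) <
      (univ.filter (fun p : V × V => K.compl.r v p.1 p.2)).card) :
    (∃ x0 x1 y0, K.SGood v x0 x1 y0 a b) ∨ (∃ x0 x1 y0, K.compl.SGood v x0 x1 y0 a b) := by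
  have hfree' : ∀ a b c d, ¬ K.compl.Bad a b c d := fun a b c d h => hfree _ _ _ _ (K.bad_compl _ _ _ _ h)
  have hcard : 3 ≤ Fintype.card V := by
    by_contra hlt
    have h3 : (univ.filter (fun p : V × V => K.r v p.1 p.2)).card ≤ Fintype.card V * Fintype.card V := by
      refine (card_le_univ _).trans ?_
      rw [Fintype.card_prod]
    have h4 : ((univ.filter (fun p : V × V => K.r v p.1 p.2)).card : ℝ) ≤
      Fintype.card V * Fintype.card V := by exact_mod_cast h3
    have h5 : (Fintype.card V : ℝ) ≤ 2 := by
      have : Fintype.card V ≤ 2 := by omega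
      exact_mod_cast this
    nlinarith [Nat.cast_nonneg (α := ℝ) (Fintype.card V)]
  have hc2 : 2 ≤ (univ.erase v).card := by
    rw [card_erase_of_mem (mem_univ _), card_univ]; omega
  have := cat_main (univ.erase v) a b hb (by linarith) _ (K.link v) (K.link_p4free v hfree)
    (univ.erase v) ∅ ∅ le_rfl hc2 (by simp) (by simp) (by simp) (by simp) (by simp) (by simp)
    (by simp; linarith) (by simp; linarith)
  rcases this with h | h
  · exact Or.inl (K.exact_cut hfree v a b ha hb h1 h)
  · right
    refine K.compl.exact_cut hfree' v a b ha hb h2 ?_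
    have hadj : ∀ x ∈ univ.erase v, ∀ y ∈ univ.erase v,
        ((K.link v)ᶜ.Adj x y ↔ (K.compl.link v).Adj x y) := by
      intro x hx y hy
      simp only [mem_erase, mem_univ, and_true] at hx hy
      simp [link, compl, hx.symm, hy.symm]
    rcases h with h | h
    · left
      refine le_trans (le_of_eq ?_) h
      congr 2
      ext p
      simp only [mem_filter]
      apply and_congr_right
      intro hp
      rw [mem_product] at hp
      exact (hadj _ hp.1 _ hp.2).symm
    · right
      obtain ⟨X, Y, T, A, x0, x1, y0, hR, d1, d2, d3, cT, cY, cX, hx0, hAX, hx1, hy0, hA, hY, hTX, hT0⟩ := h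
      have mX : ∀ u ∈ X, u ∈ univ.erase v := fun u hu => by rw [hR]; simp [hu]
      have mY : ∀ u ∈ Y, u ∈ univ.erase v := fun u hu => by rw [hR]; simp [hu]
      have mT : ∀ u ∈ T, u ∈ univ.erase v := fun u hu => by rw [hR]; simp [hu]
      refine ⟨X, Y, T, A, x0, x1, y0, hR, d1, d2, d3, cT, cY, cX, hx0, hAX, hx1, hy0, ?_, ?_, ?_, ?_⟩
      · intro x hx x' hx'
        exact (hadj _ (mX _ (hAX hx)) _ (mX _ (mem_sdiff.mp hx').1)).mp (hA x hx x' hx')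
      · intro x hx x' hx' h
        exact hY x hx x' hx' ((hadj _ (mY _ hx) _ (mX _ hx')).mpr h)
      · intro x hx x' hx'
        exact (hadj _ (mT _ hx) _ (mX _ hx')).mp (hTX x hx x' hx')
      · intro x hx
        exact (hadj _ (mT _ hx) _ (mY _ hy0)).mp (hT0 x hx)

end Hyp
end D2R
end RemovalHyp

section RemovalSample
open scoped Classical
set_option linter.unusedVariables false

namespace D2R

noncomputable def cnt {α : Type} [Fintype α] (P : α → Prop) : ℕ := (univ.filter (fun a => P a)).card

lemma cnt_eq {α : Type} [Fintype α] (P : α → Prop) {h : DecidablePred P} :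
    (univ.filter P).card = cnt P := by
  unfold cnt; congr

lemma cnt_mono {α : Type} [Fintype α] {P Q : α → Prop} (h : ∀ a, P a → Q a) : cnt P ≤ cnt Q := by
  apply card_le_card
  intro a ha
  simp only [mem_filter, mem_univ, true_and] at ha ⊢
  exact h a ha

lemma cnt_or {α : Type} [Fintype α] (P Q : α → Prop) : cnt (fun a => P a ∨ Q a) ≤ cnt P + cnt Q := by
  unfold cnt
  refine le_trans (card_le_card ?_) (card_union_le _ _)
  intro a ha
  simpa using ha

lemma cnt_le_univ {α : Type} [Fintype α] (P : α → Prop) : cnt P ≤ Fintype.card α := by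
  unfold cnt
  exact card_le_univ _

lemma cnt_inj {α β : Type} [Fintype α] [Fintype β] {P : α → Prop} {Q : β → Prop} (e : α → β)
    (he : Function.Injective e) (h : ∀ a, P a → Q (e a)) : cnt P ≤ cnt Q := by
  unfold cnt
  apply card_le_card_of_injOn e
  · intro a ha
    simp only [coe_filter, mem_univ, true_and, Set.mem_ofPred_eq] at ha ⊢
    exact h a ha
  · exact he.injOn

lemma cnt_prod {α β : Type} [Fintype α] [Fintype β] (P : α → Prop) (Q : β → Prop) :
    cnt (fun p : α × β => P p.1 ∧ Q p.2) = cnt P * cnt Q := by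
  unfold cnt
  rw [← card_product]
  congr 1
  ext p; simp

lemma cnt_sum {α : Type} [Fintype α] (P : α → Prop) : (cnt P : ℝ) = ∑ a, if P a then (1:ℝ) else 0 := by
  unfold cnt
  rw [card_filter]; push_cast; rfl

lemma cnt_fiber {α β : Type} [Fintype α] [Fintype β] (P : α × β → Prop) :
    cnt P = ∑ a, cnt (fun b => P (a, b)) := by
  unfold cnt
  simp only [card_filter]
  exact Fintype.sum_prod_type _

lemma cnt_exists {α β : Type} [Fintype α] [Fintype β] (P : α → β → Prop) (c : ℝ)
    (h : ∀ b, (cnt (fun a => P a b) : ℝ) ≤ c) :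
    (cnt (fun a => ∃ b, P a b) : ℝ) ≤ Fintype.card β * c := by
  have h1 : cnt (fun a => ∃ b, P a b) ≤ ∑ b, cnt (fun a => P a b) := by
    unfold cnt
    refine le_trans (card_le_card ?_) (card_biUnion_le (s := univ))
    intro a ha
    simpa using ha
  calc (cnt (fun a => ∃ b, P a b) : ℝ) ≤ ∑ b, (cnt (fun a => P a b) : ℝ) := by exact_mod_cast h1
    _ ≤ ∑ b : β, c := sum_le_sum (fun b _ => h b)
    _ = _ := by simp

lemma count_embed {κ ι V : Type} [Fintype κ] [Fintype ι] [Fintype V] [DecidableEq κ] [DecidableEq ι] (e : κ → ι)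
    (he : Function.Injective e) (P : (κ → V) → Prop) :
    cnt (fun f : ι → V => P (f ∘ e)) * (Fintype.card V) ^ (Fintype.card κ) =
    cnt P * (Fintype.card V) ^ (Fintype.card ι) := by
  unfold cnt
  let R := {i : ι // ¬ ∃ k, e k = i}
  let Φ : κ ⊕ R ≃ ι :=
    (Equiv.sumCongr (Equiv.ofInjective e he) (Equiv.refl R)).trans
      (Equiv.sumCompl (fun i => ∃ k, e k = i))
  have hΦ : ∀ k, Φ (Sum.inl k) = e k := by intro k; rfl
  let Ψ : (ι → V) ≃ (κ → V) × (R → V) :=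
    (Equiv.arrowCongr Φ.symm (Equiv.refl V)).trans (Equiv.sumArrowEquivProdArrow κ R V)
  have hΨ : ∀ f, (Ψ f).1 = f ∘ e := by
    intro f; funext k
    simp [Ψ, Equiv.sumArrowEquivProdArrow, Equiv.arrowCongr, hΦ]
  have h1 : (univ.filter (fun f : ι → V => P (f ∘ e))).card =
      ((univ.filter (fun g : κ → V => P g)) ×ˢ (univ : Finset (R → V))).card := by
    apply Finset.card_bij (fun f _ => Ψ f)
    · intro f hf
      simp only [mem_filter, mem_univ, true_and, mem_product, and_true] at hf ⊢
      rwa [hΨ]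
    · intro f _ g _ h
      exact Ψ.injective h
    · intro p hp
      refine ⟨Ψ.symm p, ?_, by simp⟩
      simp only [mem_filter, mem_univ, true_and, mem_product, and_true] at hp ⊢
      rwa [← hΨ, Equiv.apply_symm_apply]
  have h2 : Fintype.card ι = Fintype.card κ + Fintype.card R := by
    rw [← Fintype.card_congr Φ, Fintype.card_sum]
  rw [h1, card_product, card_univ, Fintype.card_fun, h2, pow_add]
  ring

lemma tail_sum {m : ℕ} {Ω : Type} [Fintype Ω] [Nonempty Ω] (J : Finset (Fin m))
    (w : (Fin m → Ω) → Ω → ℝ) (hw0 : ∀ f ω, 0 ≤ w f ω)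
    (hdep : ∀ f g, (∀ i ∈ J, f i = g i) → w f = w g) (q : ℝ) (hq : 0 ≤ q)
    (hq' : ∀ f, ∑ ω, w f ω ≤ q * Fintype.card Ω) :
    ∑ f : Fin m → Ω, ∏ i ∈ univ.filter (fun i => i ∉ J), w f (f i) ≤
      q ^ (m - J.card) * (Fintype.card Ω : ℝ) ^ m := by
  let Ψ := Equiv.piEquivPiSubtypeProd (fun i => i ∈ J) (fun _ : Fin m => Ω)
  have ω0 : Ω := Classical.choice inferInstance
  let w' : ({i // i ∈ J} → Ω) → Ω → ℝ := fun a => w (Ψ.symm (a, fun _ => ω0))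
  have hww : ∀ f, w f = w' (Ψ f).1 := by
    intro f
    apply hdep
    intro i hi
    simp [Ψ, Equiv.piEquivPiSubtypeProd, hi]
  have hprod : ∀ f : Fin m → Ω, ∏ i ∈ univ.filter (fun i => i ∉ J), w f (f i) =
      ∏ i : {i // i ∉ J}, w' (Ψ f).1 ((Ψ f).2 i) := by
    intro f
    rw [hww f]
    rw [← Finset.prod_subtype_eq_prod_filter]
    rw [Finset.subtype_univ]
    rfl
  have hcJ : Fintype.card {i // i ∈ J} = J.card := by simp
  have hcJ' : Fintype.card {i // i ∉ J} = m - J.card := by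
    rw [Fintype.card_subtype_compl]; simp
  have hJm : J.card ≤ m := by simpa using card_le_univ J
  calc _ = ∑ f : Fin m → Ω, ∏ i : {i // i ∉ J}, w' (Ψ f).1 ((Ψ f).2 i) :=
        sum_congr rfl (fun f _ => hprod f)
    _ = ∑ p : ({i // i ∈ J} → Ω) × ({i // i ∉ J} → Ω), ∏ i : {i // i ∉ J}, w' p.1 (p.2 i) :=
        Fintype.sum_equiv Ψ _ _ (fun f => rfl)
    _ = ∑ a : {i // i ∈ J} → Ω, ∑ b : {i // i ∉ J} → Ω, ∏ i, w' a (b i) :=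
        Fintype.sum_prod_type _
    _ = ∑ a : {i // i ∈ J} → Ω, (∑ ω, w' a ω) ^ (m - J.card) := by
        apply sum_congr rfl
        intro a _
        have := Finset.prod_univ_sum (fun _ : {i // i ∉ J} => (univ : Finset Ω)) (fun _ ω => w' a ω)
        rw [prod_const, card_univ, hcJ', Fintype.piFinset_univ] at this
        exact this.symm
    _ ≤ ∑ a : {i // i ∈ J} → Ω, (q * Fintype.card Ω) ^ (m - J.card) := by
        apply sum_le_sum
        intro a _
        exact pow_le_pow_left₀ (sum_nonneg (fun ω _ => hw0 _ _)) (hq' _) _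
    _ = (Fintype.card Ω : ℝ) ^ J.card * (q * Fintype.card Ω) ^ (m - J.card) := by
        rw [sum_const, card_univ, Fintype.card_fun, hcJ, nsmul_eq_mul]; push_cast; rfl
    _ = _ := by
        rw [mul_pow]
        have : (Fintype.card Ω : ℝ) ^ m = (Fintype.card Ω : ℝ) ^ J.card * (Fintype.card Ω : ℝ) ^ (m - J.card) := by
          rw [← pow_add]; congr 1; omega
        rw [this]; ring

lemma tail_event {m : ℕ} {Ω : Type} [Fintype Ω] [Nonempty Ω] (J : Finset (Fin m)) (hJ : J.card ≤ 4)
    (w : (Fin m → Ω) → Ω → ℝ) (hw0 : ∀ f ω, 0 ≤ w f ω)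
    (hdep : ∀ f g, (∀ i ∈ J, f i = g i) → w f = w g) (q : ℝ) (hq : 0 ≤ q) (hq1 : q ≤ 1)
    (hq' : ∀ f, ∑ ω, w f ω ≤ q * Fintype.card Ω) (Ev : (Fin m → Ω) → Prop)
    (hEv : ∀ f, Ev f → 1 ≤ ∏ i ∈ univ.filter (fun i => i ∉ J), w f (f i)) :
    (cnt Ev : ℝ) ≤ q ^ (m - 4) * (Fintype.card Ω : ℝ) ^ m := by
  have h1 := tail_sum J w hw0 hdep q hq hq'
  have h2 : (cnt Ev : ℝ) ≤ 
      ∑ f : Fin m → Ω, ∏ i ∈ univ.filter (fun i => i ∉ J), w f (f i) := by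
    rw [cnt_sum]
    apply sum_le_sum
    intro f _
    split_ifs with h
    · exact hEv f h
    · exact prod_nonneg (fun i _ => hw0 _ _)
  refine h2.trans (h1.trans ?_)
  gcongr ?_ * _
  exact pow_le_pow_of_le_one hq hq1 (by omega)

lemma block_tail {m : ℕ} {Ω : Type} [Fintype Ω] [Nonempty Ω] (J : Finset (Fin m)) (hJ : J.card ≤ 4)
    (B : (Fin m → Ω) → Ω → Prop) (hdep : ∀ f g, (∀ i ∈ J, f i = g i) → B f = B g)
    (γ : ℝ) (hγ : 0 ≤ γ) (Ev : (Fin m → Ω) → Prop)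
    (hEv : ∀ f, Ev f → γ * Fintype.card Ω ≤ cnt (B f) ∧
      ∀ i, i ∉ J → ¬ B f (f i)) :
    (cnt Ev : ℝ) ≤
      (Real.exp (-γ)) ^ (m - 4) * (Fintype.card Ω : ℝ) ^ m := by
  apply tail_event J hJ (fun f ω => if γ * Fintype.card Ω ≤ cnt (B f) ∧ ¬ B f ω
    then 1 else 0)
  · intro f ω; positivity
  · intro f g h; funext ω; simp only [hdep f g h]
  · positivity
  · simpa using hγ
  · intro f
    by_cases h : γ * Fintype.card Ω ≤ cnt (B f)
    · simp only [h, true_and]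
      unfold cnt at h
      have h1 : ((univ.filter (B f)).card : ℝ) + (univ.filter (fun ω => ¬ B f ω)).card = Fintype.card Ω := by
        have := card_filter_add_card_filter_not (s := univ) (B f)
        rw [card_univ] at this
        exact_mod_cast this
      have h2 : (∑ ω, if ¬ B f ω then (1:ℝ) else 0) = (univ.filter (fun ω => ¬ B f ω)).card := by
        rw [card_filter]; push_cast; rfl
      rw [h2]
      have h3 := Real.add_one_le_exp (-γ)
      have h4 : (-γ + 1) * (Fintype.card Ω : ℝ) ≤ Real.exp (-γ) * Fintype.card Ω := by gcongr
      nlinarith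
    · simp only [h, false_and, if_false]
      simp; positivity
  · intro f hf
    obtain ⟨h1, h2⟩ := hEv f hf
    rw [prod_eq_one]
    intro i hi
    simp only [mem_filter, mem_univ, true_and] at hi
    simp only [h1, h2 i hi]; simp

lemma point_tail {m : ℕ} {V : Type} [Fintype V] [Nonempty V] (J : Finset (Fin m)) (hJ : J.card ≤ 4)
    (φ : (Fin m → Fin 4 → V) → V → ℝ) (hdep : ∀ f g, (∀ i ∈ J, f i = g i) → φ f = φ g)
    (γ : ℝ) (hγ : 0 ≤ γ) (Ev : (Fin m → Fin 4 → V) → Prop)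
    (hEv : ∀ f, Ev f → 
      (∑ u, Real.exp (φ f u) ≤ Real.exp (-γ) * Fintype.card V) ∧
      0 ≤ ∑ i ∈ univ.filter (fun i => i ∉ J), ∑ c, φ f (f i c)) :
    (cnt Ev : ℝ) ≤
      (Real.exp (-γ)) ^ (m - 4) * (Fintype.card (Fin 4 → V) : ℝ) ^ m := by
  apply tail_event J hJ (fun f ω => if (∑ u, Real.exp (φ f u) ≤ Real.exp (-γ) * Fintype.card V)
    then ∏ c, Real.exp (φ f (ω c)) else 0)
  · intro f ω; positivity
  · intro f g h; funext ω; simp only [hdep f g h]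
  · positivity
  · simpa using hγ
  · intro f
    by_cases h : (∑ u, Real.exp (φ f u) ≤ Real.exp (-γ) * Fintype.card V)
    · simp only [h, if_true]
      have := Finset.prod_univ_sum (fun _ : Fin 4 => (univ : Finset V)) (fun _ u => Real.exp (φ f u))
      rw [prod_const, card_univ, Fintype.card_fin, Fintype.piFinset_univ] at this
      rw [← this]
      have h2 : (∑ u, Real.exp (φ f u)) ^ 4 ≤ (Real.exp (-γ) * Fintype.card V) ^ 4 :=
        pow_le_pow_left₀ (by positivity) h 4
      refine h2.trans ?_
      rw [Fintype.card_fun, Fintype.card_fin, mul_pow]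
      push_cast
      gcongr
      refine pow_le_of_le_one (by positivity) (by simpa using hγ) (by norm_num)
    · simp only [h, if_false]
      simp; positivity
  · intro f hf
    obtain ⟨h1, h2⟩ := hEv f hf
    simp only [h1, if_true]
    simp_rw [← Real.exp_sum]
    exact Real.one_le_exp h2

end D2R
end RemovalSample


section RemovalCut
open scoped Classical
set_option linter.unusedVariables false

namespace D2R

variable {V : Type} {m : ℕ}

def fl {V : Type} {m : ℕ} (f : Fin m → Fin 4 → V) : Fin m × Fin 4 → V := fun p => f p.1 p.2

lemma hits_sum (J : Finset (Fin m)) (A : V → Prop) (f : Fin m → Fin 4 → V) :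
    (∑ i ∈ univ.filter (fun i => i ∉ J), ∑ c, (if A (f i c) then (1:ℝ) else 0)) =
    cnt (fun p : Fin m × Fin 4 => p.1 ∉ J ∧ A (fl f p)) := by
  rw [cnt_sum]
  rw [Fintype.sum_prod_type, sum_filter]
  apply sum_congr rfl
  intro i _
  by_cases h : i ∈ J <;> simp [h, fl]

lemma hits_sub (J : Finset (Fin m)) (A : V → Prop) (f : Fin m → Fin 4 → V) (β : ℝ) :
    (∑ i ∈ univ.filter (fun i => i ∉ J), ∑ c, ((if A (f i c) then (1:ℝ) else 0) - β)) =
    cnt (fun p : Fin m × Fin 4 => p.1 ∉ J ∧ A (fl f p))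
      - 4 * β * (m - J.card : ℝ) := by
  rw [← hits_sum]
  simp only [sum_sub_distrib]
  have : ((univ.filter (fun i => i ∉ J)).card : ℝ) = m - J.card := by
    have h := card_filter_add_card_filter_not (s := (univ : Finset (Fin m))) (fun i => i ∈ J)
    rw [Finset.filter_mem_eq_inter, univ_inter, card_univ, Fintype.card_fin] at h
    have h' : (J.card : ℝ) + (univ.filter (fun i => i ∉ J)).card = m := by exact_mod_cast h
    linarith
  simp only [sum_const, nsmul_eq_mul, card_univ, Fintype.card_fin, this]
  push_cast; ring

lemma upper_tail [Fintype V] [Nonempty V] (J : Finset (Fin m)) (hJ : J.card ≤ 4)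
    (A : (Fin m → Fin 4 → V) → V → Prop) (hdep : ∀ f g, (∀ i ∈ J, f i = g i) → A f = A g)
    (β : ℝ) (hβ : 0 ≤ β) (Ev : (Fin m → Fin 4 → V) → Prop)
    (hEv : ∀ f, Ev f → (cnt (A f) : ℝ) ≤ β / 4 * Fintype.card V ∧
      4 * β * m ≤ cnt (fun p : Fin m × Fin 4 => p.1 ∉ J ∧ A f (fl f p))) :
    (cnt Ev : ℝ) ≤
      (Real.exp (-(β/2))) ^ (m - 4) * (Fintype.card (Fin 4 → V) : ℝ) ^ m := by
  apply point_tail J hJ (fun f u => (if A f u then (1:ℝ) else 0) - β)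
  · intro f g h; funext u; simp only [hdep f g h]
  · positivity
  · intro f hf
    obtain ⟨h1, h2⟩ := hEv f hf
    constructor
    · have e1 : ∀ u, Real.exp ((if A f u then (1:ℝ) else 0) - β) ≤
          Real.exp (-β) * (1 + 2 * (if A f u then (1:ℝ) else 0)) := by
        intro u
        rw [sub_eq_add_neg, add_comm, Real.exp_add]
        gcongr
        split_ifs
        · have := Real.exp_one_lt_d9; linarith
        · simp
      have e2 : ∑ u, Real.exp ((if A f u then (1:ℝ) else 0) - β) ≤
          Real.exp (-β) * (Fintype.card V + 2 * cnt (A f)) := by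
        refine (sum_le_sum (fun u _ => e1 u)).trans (le_of_eq ?_)
        rw [← mul_sum, sum_add_distrib, ← mul_sum, cnt_sum]
        simp
      refine e2.trans ?_
      have e3 : Real.exp (-(β/2)) = Real.exp (-β) * Real.exp (β/2) := by
        rw [← Real.exp_add]; congr 1; ring
      rw [e3, mul_assoc]
      gcongr
      have e4 := Real.add_one_le_exp (β/2)
      have e5 : (β/2 + 1) * (Fintype.card V : ℝ) ≤ Real.exp (β/2) * Fintype.card V := by gcongr
      linarith
    · rw [hits_sub]
      have : 0 ≤ β * (J.card : ℝ) := by positivity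
      linarith

lemma lower_tail [Fintype V] [Nonempty V] (J : Finset (Fin m)) (hJ : J.card ≤ 4)
    (A : (Fin m → Fin 4 → V) → V → Prop) (hdep : ∀ f g, (∀ i ∈ J, f i = g i) → A f = A g)
    (β : ℝ) (hβ : 0 ≤ β) (Ev : (Fin m → Fin 4 → V) → Prop)
    (hEv : ∀ f, Ev f → 4 * β * Fintype.card V ≤ (cnt (A f) : ℝ) ∧
      cnt (fun p : Fin m × Fin 4 => p.1 ∉ J ∧ A f (fl f p)) ≤ 4 * β * (m - 4)) :
    (cnt Ev : ℝ) ≤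
      (Real.exp (-β)) ^ (m - 4) * (Fintype.card (Fin 4 → V) : ℝ) ^ m := by
  apply point_tail J hJ (fun f u => - ((if A f u then (1:ℝ) else 0) - β))
  · intro f g h; funext u; simp only [hdep f g h]
  · positivity
  · intro f hf
    obtain ⟨h1, h2⟩ := hEv f hf
    constructor
    · have e1 : ∀ u, Real.exp (-((if A f u then (1:ℝ) else 0) - β)) ≤
          Real.exp β * (1 - 1/2 * (if A f u then (1:ℝ) else 0)) := by
        intro u
        rw [neg_sub, sub_eq_add_neg, Real.exp_add]
        gcongr
        split_ifs
        · have := Real.exp_neg_one_lt_d9; linarith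
        · simp
      have e2 : ∑ u, Real.exp (-((if A f u then (1:ℝ) else 0) - β)) ≤
          Real.exp (β) * (Fintype.card V - 1/2 * cnt (A f)) := by
        refine (sum_le_sum (fun u _ => e1 u)).trans (le_of_eq ?_)
        rw [← mul_sum, sum_sub_distrib, ← mul_sum, cnt_sum]
        simp
      refine e2.trans ?_
      have e3 : Real.exp (-β) = Real.exp β * Real.exp (-2*β) := by
        rw [← Real.exp_add]; congr 1; ring
      rw [e3, mul_assoc]
      gcongr
      have e4 := Real.add_one_le_exp (-2*β)
      have e5 : (-2*β + 1) * (Fintype.card V : ℝ) ≤ Real.exp (-2*β) * Fintype.card V := by gcongr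
      linarith
    · simp only [sum_neg_distrib]
      rw [hits_sub]
      have : (J.card : ℝ) ≤ 4 := by exact_mod_cast hJ
      have : β * (J.card : ℝ) ≤ β * 4 := by gcongr
      linarith

/-- good cut in the whole -/
def Hyp.VGood [Fintype V] (G : Hyp V) (α c γ : ℝ) (v x0 x1 y0 : V) : Prop :=
  (cnt (fun u => ¬ G.Xp v x0 x1 y0 u ∧ ¬ G.Yp v x0 x1 u) : ℝ) ≤
    16 * α * Fintype.card V ∧
  c / 16 * Fintype.card V ≤ cnt (fun u => G.Xp v x0 x1 y0 u) ∧
  α / 8 * Fintype.card V ≤ cnt (fun u => G.Yp v x0 x1 u) ∧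
  (cnt (fun ω : Fin 4 → V => G.Xp v x0 x1 y0 (ω 0) ∧ G.Xp v x0 x1 y0 (ω 1) ∧
    G.Yp v x0 x1 (ω 2) ∧ G.r (ω 0) (ω 1) (ω 2)) : ℝ) ≤ γ * Fintype.card (Fin 4 → V) ∧
  (cnt (fun ω : Fin 4 → V => G.Xp v x0 x1 y0 (ω 0) ∧ G.Xp v x0 x1 y0 (ω 1) ∧
    G.Yp v x0 x1 (ω 2) ∧ G.Yp v x0 x1 (ω 3) ∧ ω 0 ≠ ω 1 ∧ G.r (ω 0) (ω 2) (ω 3) ∧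
    G.r (ω 1) (ω 2) (ω 3)) : ℝ) ≤ γ * Fintype.card (Fin 4 → V)

lemma card_or5 {β : Type} [Fintype β] (P A1 A2 A3 A4 A5 : β → Prop) (b : ℝ)
    (h : ∀ x, P x → A1 x ∨ A2 x ∨ A3 x ∨ A4 x ∨ A5 x)
    (h1 : (cnt A1 : ℝ) ≤ b) (h2 : (cnt A2 : ℝ) ≤ b)
    (h3 : (cnt A3 : ℝ) ≤ b) (h4 : (cnt A4 : ℝ) ≤ b)
    (h5 : (cnt A5 : ℝ) ≤ b) : (cnt P : ℝ) ≤ 5 * b := by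
  have h6 := (cnt_mono h).trans ((cnt_or _ _).trans (Nat.add_le_add_left
    ((cnt_or _ _).trans (Nat.add_le_add_left ((cnt_or _ _).trans
    (Nat.add_le_add_left (cnt_or _ _) _)) _)) _))
  have h7 : (cnt P : ℝ) ≤ cnt A1 + (cnt A2 +
    (cnt A3 + (cnt A4 + cnt A5))) := by
    exact_mod_cast h6
  linarith

lemma hits_split (J : Finset (Fin m)) (hJ : J.card ≤ 4) (P Q : Fin m × Fin 4 → Prop)
    (h : ∀ p, P p → Q p) :
    (cnt P : ℝ) ≤ cnt (fun p : Fin m × Fin 4 => p.1 ∉ J ∧ Q p) + 16 := by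
  have h1 : cnt P ≤ cnt (fun p : Fin m × Fin 4 => (p.1 ∉ J ∧ Q p) ∨ (p.1 ∈ J ∧ True)) :=
    cnt_mono (fun p hp => by have := h p hp; tauto)
  have h3 := h1.trans (cnt_or _ _)
  rw [cnt_prod (fun i => i ∈ J) (fun _ : Fin 4 => True)] at h3
  have h4 : cnt (fun i => i ∈ J) = J.card := by unfold cnt; simp
  have h5 : cnt (fun _ : Fin 4 => True) = 4 := by unfold cnt; simp
  rw [h4, h5] at h3
  have h2 : cnt P ≤ cnt (fun p : Fin m × Fin 4 => p.1 ∉ J ∧ Q p) + 16 := by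
    omega
  exact_mod_cast h2

lemma cut_sample [Fintype V] [Nonempty V] (G : Hyp V) (α c γ : ℝ) (hα : 0 < α) (hc : 0 < c) (hγ : 0 ≤ γ)
    (hγα : γ ≤ α / 4) (hγc : γ ≤ c / 8) (hm : 8 ≤ m) (hαm : 8 ≤ α * m) (hcm : 16 ≤ c * m)
    (v x0 x1 y0 : Fin m × Fin 4) :
    (cnt (fun f : Fin m → Fin 4 → V => Function.Injective (fl f) ∧
      (G.comap (fl f)).SGood v x0 x1 y0 (4 * α * m) (2 * c * m) ∧
      ¬ G.VGood α c γ (fl f v) (fl f x0) (fl f x1) (fl f y0)) : ℝ) ≤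
      5 * ((Real.exp (-γ)) ^ (m - 4) * (Fintype.card (Fin 4 → V) : ℝ) ^ m) := by
  let J : Finset (Fin m) := {v.1, x0.1, x1.1, y0.1}
  have hJ : J.card ≤ 4 := Finset.card_le_four
  let X : (Fin m → Fin 4 → V) → V → Prop := fun f => G.Xp (fl f v) (fl f x0) (fl f x1) (fl f y0)
  let Y : (Fin m → Fin 4 → V) → V → Prop := fun f => G.Yp (fl f v) (fl f x0) (fl f x1)
  have hd : ∀ f g : Fin m → Fin 4 → V, (∀ i ∈ J, f i = g i) → 
      fl f v = fl g v ∧ fl f x0 = fl g x0 ∧ fl f x1 = fl g x1 ∧ fl f y0 = fl g y0 := by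
    intro f g h
    simp only [fl]
    refine ⟨?_, ?_, ?_, ?_⟩ <;> rw [h] <;> simp [J]
  have hX : ∀ f g : Fin m → Fin 4 → V, (∀ i ∈ J, f i = g i) → X f = X g := by
    intro f g h
    obtain ⟨h1, h2, h3, h4⟩ := hd f g h
    simp only [X, h1, h2, h3, h4]
  have hY : ∀ f g : Fin m → Fin 4 → V, (∀ i ∈ J, f i = g i) → Y f = Y g := by
    intro f g h
    obtain ⟨h1, h2, h3, h4⟩ := hd f g h
    simp only [Y, h1, h2, h3]
  let Gd : (Fin m → Fin 4 → V) → Prop := fun f => Function.Injective (fl f) ∧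
      (G.comap (fl f)).SGood v x0 x1 y0 (4 * α * m) (2 * c * m)
  have hYV : ∀ f, Function.Injective (fl f) → ∀ p, (G.comap (fl f)).Yp v x0 x1 p ↔ Y f (fl f p) := by
    intro f hf p
    simp only [Y, Hyp.Yp, Hyp.comap, hf.ne_iff]
  have hXV : ∀ f p, (G.comap (fl f)).Xp v x0 x1 y0 p ↔ X f (fl f p) := by
    intro f p; rfl
  have mono : ∀ β : ℝ, γ ≤ β → (Real.exp (-β)) ^ (m - 4) * (Fintype.card (Fin 4 → V) : ℝ) ^ m ≤
      (Real.exp (-γ)) ^ (m - 4) * (Fintype.card (Fin 4 → V) : ℝ) ^ m := by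
    intro β hβ
    gcongr
  have hm' : (8:ℝ) ≤ m := by exact_mod_cast hm
  have t1 : (cnt (fun f => Gd f ∧ 
      16 * α * Fintype.card V ≤ cnt (fun u => ¬ X f u ∧ ¬ Y f u)) : ℝ) ≤
      (Real.exp (-γ)) ^ (m - 4) * (Fintype.card (Fin 4 → V) : ℝ) ^ m := by
    refine le_trans ?_ (mono (4*α) (by linarith))
    apply lower_tail J hJ (fun f u => ¬ X f u ∧ ¬ Y f u)
    · intro f g h; simp only [hX f g h, hY f g h]
    · positivity
    · rintro f ⟨⟨h1, h2⟩, h3⟩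
      refine ⟨by linarith, ?_⟩
      have h4 := h2.1
      rw [cnt_eq] at h4
      simp only [hYV f h1, hXV f] at h4
      have h5 : (cnt (fun p : Fin m × Fin 4 => p.1 ∉ J ∧ ¬ X f (fl f p) ∧ ¬ Y f (fl f p)) : ℝ) ≤
          cnt (fun p : Fin m × Fin 4 => ¬ X f (fl f p) ∧ ¬ Y f (fl f p)) := by
        exact Nat.cast_le.2 (cnt_mono (fun p hp => And.right hp))
      have : α * 8 ≤ α * m := by gcongr
      linarith
  have t2 : (cnt (fun f => Gd f ∧ 
      (cnt (fun u => X f u) : ℝ) ≤ c / 16 * Fintype.card V) : ℝ) ≤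
      (Real.exp (-γ)) ^ (m - 4) * (Fintype.card (Fin 4 → V) : ℝ) ^ m := by
    refine le_trans ?_ (mono (c/4/2) (by linarith))
    apply upper_tail J hJ X hX (c/4) (by positivity)
    rintro f ⟨⟨h1, h2⟩, h3⟩
    refine ⟨by linarith, ?_⟩
    have h4 := h2.2.1
    rw [cnt_eq] at h4
    have h5 := hits_split J hJ (fun p => (G.comap (fl f)).Xp v x0 x1 y0 p) (fun p => X f (fl f p))
      (fun p hp => hp)
    linarith
  have t3 : (cnt (fun f => Gd f ∧ 
      (cnt (fun u => Y f u) : ℝ) ≤ α / 8 * Fintype.card V) : ℝ) ≤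
      (Real.exp (-γ)) ^ (m - 4) * (Fintype.card (Fin 4 → V) : ℝ) ^ m := by
    refine le_trans ?_ (mono (α/2/2) (by linarith))
    apply upper_tail J hJ Y hY (α/2) (by positivity)
    rintro f ⟨⟨h1, h2⟩, h3⟩
    refine ⟨by linarith, ?_⟩
    have h4 := h2.2.2.1
    rw [cnt_eq] at h4
    have h5 := hits_split J hJ (fun p => (G.comap (fl f)).Yp v x0 x1 p) (fun p => Y f (fl f p))
      (fun p hp => (hYV f h1 p).1 hp)
    linarith
  have t4 : (cnt (fun f => Gd f ∧ γ * Fintype.card (Fin 4 → V) ≤ 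
      (cnt (fun ω : Fin 4 → V => X f (ω 0) ∧ X f (ω 1) ∧
      Y f (ω 2) ∧ G.r (ω 0) (ω 1) (ω 2)) : ℝ)) : ℝ) ≤
      (Real.exp (-γ)) ^ (m - 4) * (Fintype.card (Fin 4 → V) : ℝ) ^ m := by
    apply block_tail J hJ (fun f ω => X f (ω 0) ∧ X f (ω 1) ∧
      Y f (ω 2) ∧ G.r (ω 0) (ω 1) (ω 2)) _ γ hγ
    · rintro f ⟨⟨h1, h2⟩, h3⟩
      refine ⟨h3, ?_⟩
      rintro i hi ⟨q1, q2, q3, q4⟩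
      exact h2.2.2.2.1 (i,0) (i,1) (i,2) q1 q2 ((hYV f h1 (i,2)).2 q3) q4
    · intro f g h; simp only [hX f g h, hY f g h]
  have t5 : (cnt (fun f => Gd f ∧ γ * Fintype.card (Fin 4 → V) ≤ 
      (cnt (fun ω : Fin 4 → V => X f (ω 0) ∧ X f (ω 1) ∧
      Y f (ω 2) ∧ Y f (ω 3) ∧ ω 0 ≠ ω 1 ∧ G.r (ω 0) (ω 2) (ω 3) ∧
      G.r (ω 1) (ω 2) (ω 3)) : ℝ)) : ℝ) ≤
      (Real.exp (-γ)) ^ (m - 4) * (Fintype.card (Fin 4 → V) : ℝ) ^ m := by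
    apply block_tail J hJ (fun f ω => X f (ω 0) ∧ X f (ω 1) ∧
      Y f (ω 2) ∧ Y f (ω 3) ∧ ω 0 ≠ ω 1 ∧ G.r (ω 0) (ω 2) (ω 3) ∧ G.r (ω 1) (ω 2) (ω 3)) _ γ hγ
    · rintro f ⟨⟨h1, h2⟩, h3⟩
      refine ⟨h3, ?_⟩
      rintro i hi ⟨q1, q2, q3, q4, q5, q6, q7⟩
      exact h2.2.2.2.2 (i,0) (i,1) (i,2) (i,3) q1 q2 ((hYV f h1 (i,2)).2 q3)
        ((hYV f h1 (i,3)).2 q4) (by simp) ⟨q6, q7⟩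
    · intro f g h; simp only [hX f g h, hY f g h]
  refine card_or5 _ _ _ _ _ _ _ ?_ t1 t2 t3 t4 t5
  rintro f ⟨h1, h2, h3⟩
  by_contra hcon
  simp only [not_or, not_and, not_le] at hcon
  obtain ⟨a1, a2, a3, a4, a5⟩ := hcon
  have hg : Gd f := ⟨h1, h2⟩
  exact h3 ⟨(a1 hg).le, (a2 hg).le, (a3 hg).le, (a4 hg).le, (a5 hg).le⟩

end D2R
end RemovalCut


section RemovalCut2
open scoped Classical
set_option linter.unusedVariables false

namespace D2R

variable {V : Type} {m : ℕ}

lemma count_fl {κ : Type} [Fintype κ] [DecidableEq κ] [Fintype V] (e : κ → Fin m × Fin 4)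
    (he : Function.Injective e) (P : (κ → V) → Prop) :
    cnt (fun f : Fin m → Fin 4 → V => P (fl f ∘ e)) * (Fintype.card V) ^ (Fintype.card κ) =
    cnt P * (Fintype.card (Fin 4 → V)) ^ m := by
  have h := count_embed e he P
  have h1 : cnt (fun f : Fin m → Fin 4 → V => P (fl f ∘ e)) =
      cnt (fun f : Fin m × Fin 4 → V => P (f ∘ e)) := by
    apply le_antisymm
    · exact cnt_inj fl (fun f g h => by
        funext i c; exact congrFun h (i, c)) (fun a h => h)
    · exact cnt_inj (fun f i c => f (i, c)) (fun f g h => by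
        funext ⟨i, c⟩; exact congrFun (congrFun h i) c) (fun a h => h)
  rw [h1, h]
  simp [← pow_mul, mul_comm]

/-- mixed count -/
noncomputable def Hyp.mix [Fintype V] (H : Hyp V) : ℕ :=
  cnt (fun ω : Fin 4 → V => H.r (ω 0) (ω 1) (ω 2) ∧ H.compl.r (ω 0) (ω 1) (ω 3))

lemma comap_mixed (H : Hyp V) {S : Type} (f : S → V) (hf : Function.Injective f) (a b c : S) :
    (H.comap f).compl.r a b c ↔ H.compl.r (f a) (f b) (f c) := by
  rw [← H.comap_compl f hf]; rfl

lemma mixed_vertex {S : Type} [Fintype S] [Nonempty S] (K : Hyp S) (c : ℝ) 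
    (h : c * (Fintype.card S : ℝ) ^ 4 ≤ K.mix) :
    ∃ v, c * (Fintype.card S : ℝ) ^ 2 ≤ cnt (fun p : S × S => K.r v p.1 p.2) ∧
      c * (Fintype.card S : ℝ) ^ 2 ≤ cnt (fun p : S × S => K.compl.r v p.1 p.2) := by
  have hs : (0:ℝ) < Fintype.card S := by exact_mod_cast Fintype.card_pos
  have h1 : (K.mix : ℝ) ≤ 
      cnt (fun p : S × (S × S × S) => K.r p.1 p.2.1 p.2.2.1 ∧ K.compl.r p.1 p.2.1 p.2.2.2) := by
    refine Nat.cast_le.2 (cnt_inj (fun ω => (ω 0, ω 1, ω 2, ω 3)) ?_ (fun ω h => h))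
    intro f g h
    simp only [Prod.mk.injEq] at h
    funext i
    fin_cases i <;> simp [h]
  rw [cnt_fiber] at h1
  push_cast at h1
  have h2 : ∃ v, c * (Fintype.card S : ℝ) ^ 3 ≤ 
      cnt (fun p : S × S × S => K.r v p.1 p.2.1 ∧ K.compl.r v p.1 p.2.2) := by
    by_contra hcon
    push Not at hcon
    have h3 : (∑ v, (cnt (fun p : S × S × S => K.r v p.1 p.2.1 ∧ K.compl.r v p.1 p.2.2) : ℝ)) <
        ∑ v : S, c * (Fintype.card S : ℝ) ^ 3 :=
      sum_lt_sum_of_nonempty univ_nonempty (fun v _ => hcon v)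
    simp only [sum_const, card_univ, nsmul_eq_mul] at h3
    nlinarith
  obtain ⟨v, hv⟩ := h2
  have hT : cnt (fun _ : S => True) = Fintype.card S := by unfold cnt; simp
  have a1 : (cnt (fun p : S × S × S => K.r v p.1 p.2.1 ∧ K.compl.r v p.1 p.2.2) : ℝ) ≤
      cnt (fun p : S × S => K.r v p.1 p.2) * Fintype.card S := by
    rw [← hT, ← Nat.cast_mul, ← cnt_prod]
    refine Nat.cast_le.2 (cnt_inj (fun p => ((p.1, p.2.1), p.2.2)) ?_ ?_)
    · rintro ⟨a, b, c⟩ ⟨a', b', c'⟩ h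
      simp only [Prod.mk.injEq] at h ⊢; tauto
    · intro p hp; exact ⟨hp.1, trivial⟩
  have a2 : (cnt (fun p : S × S × S => K.r v p.1 p.2.1 ∧ K.compl.r v p.1 p.2.2) : ℝ) ≤
      cnt (fun p : S × S => K.compl.r v p.1 p.2) * Fintype.card S := by
    rw [← hT, ← Nat.cast_mul, ← cnt_prod]
    refine Nat.cast_le.2 (cnt_inj (fun p => ((p.1, p.2.2), p.2.1)) ?_ ?_)
    · rintro ⟨a, b, c⟩ ⟨a', b', c'⟩ h
      simp only [Prod.mk.injEq] at h ⊢; tauto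
    · intro p hp; exact ⟨hp.2, trivial⟩
  refine ⟨v, ?_, ?_⟩
  · refine le_of_mul_le_mul_right ?_ hs
    calc _ = c * (Fintype.card S : ℝ) ^ 3 := by ring
      _ ≤ _ := hv.trans a1
  · refine le_of_mul_le_mul_right ?_ hs
    calc _ = c * (Fintype.card S : ℝ) ^ 3 := by ring
      _ ≤ _ := hv.trans a2

lemma cnt_injective (S : Type) [Fintype S] (hs : 16 ≤ Fintype.card S) :
    (Fintype.card S : ℝ) ^ 4 / 2 ≤ cnt (fun τ : Fin 4 → S => Function.Injective τ) := by
  have h1 : cnt (fun τ : Fin 4 → S => Function.Injective τ) = (Fintype.card S).descFactorial 4 := by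
    have := Fintype.card_embedding_eq (α := Fin 4) (β := S)
    rw [Fintype.card_fin] at this
    rw [← this]
    unfold cnt
    rw [← Fintype.card_subtype]
    exact Fintype.card_congr (Equiv.subtypeInjectiveEquivEmbedding (Fin 4) S)
  rw [h1]
  have h2 : ((Fintype.card S).descFactorial 4 : ℝ) = ((Fintype.card S : ℝ) - 3) * ((Fintype.card S - 2) * ((Fintype.card S - 1) * Fintype.card S)) := by
    simp only [Nat.descFactorial_succ, Nat.descFactorial_zero]
    rw [Nat.cast_mul, Nat.cast_mul, Nat.cast_mul, Nat.cast_sub (by omega), Nat.cast_sub (by omega), Nat.cast_sub (by omega)]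
    rw [Nat.sub_zero]; push_cast; ring
  rw [h2]
  have h3 : (16:ℝ) ≤ Fintype.card S := by exact_mod_cast hs
  generalize (Fintype.card S : ℝ) = s at *
  have : (s-3)*((s-2)*((s-1)*s)) - s^4/2 = s * (s^2 * (s/2 - 6) + (11 * s - 6)) := by ring
  have : 0 ≤ s * (s^2 * (s/2 - 6) + (11 * s - 6)) := by
    apply mul_nonneg (by linarith)
    apply add_nonneg
    · apply mul_nonneg (by positivity) (by linarith)
    · linarith
  linarith

/-- reverse Markov step -/
lemma many_mixed [Fintype V] [Nonempty V] (H : Hyp V) (c : ℝ) (hc : 0 < c) (hm : 4 ≤ m)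
    (hM : 4 * c * (Fintype.card V : ℝ) ^ 4 ≤ H.mix) :
    c * (Fintype.card (Fin 4 → V) : ℝ) ^ m ≤ cnt (fun f : Fin m → Fin 4 → V =>
      c * (4 * m : ℝ) ^ 4 ≤ cnt (fun τ : Fin 4 → Fin m × Fin 4 => 
        H.r (fl f (τ 0)) (fl f (τ 1)) (fl f (τ 2)) ∧ H.compl.r (fl f (τ 0)) (fl f (τ 1)) (fl f (τ 3)))) := by
  set N : ℝ := (Fintype.card (Fin 4 → V) : ℝ) ^ m with hN
  have hn : (0:ℝ) < Fintype.card V := by exact_mod_cast Fintype.card_pos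
  let P : (Fin 4 → V) → Prop := fun ω => H.r (ω 0) (ω 1) (ω 2) ∧ H.compl.r (ω 0) (ω 1) (ω 3)
  let Q : (Fin m → Fin 4 → V) → (Fin 4 → Fin m × Fin 4) → Prop := fun f τ => P (fl f ∘ τ)
  have hs : (Fintype.card (Fin m × Fin 4) : ℝ) = 4 * m := by simp; ring
  have hs0 : (0:ℝ) < 4 * m := by have : (4:ℝ) ≤ m := by exact_mod_cast hm
                                 linarith
  have key : ∀ τ : Fin 4 → Fin m × Fin 4, Function.Injective τ → 4 * c * N ≤ cnt (fun f => Q f τ) := by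
    intro τ hτ
    have h := count_fl (V := V) τ hτ P
    have h' : (cnt (fun f => Q f τ) : ℝ) * (Fintype.card V : ℝ) ^ 4 = H.mix * N := by
      rw [hN]; unfold Hyp.mix
      rw [Fintype.card_fin] at h
      exact_mod_cast h
    have h2 : 4 * c * (Fintype.card V : ℝ) ^ 4 * N ≤ H.mix * N := by gcongr
    have h3 : (0:ℝ) < (Fintype.card V : ℝ) ^ 4 := by positivity
    refine le_of_mul_le_mul_right ?_ h3
    linarith
  have tot : 2 * c * (4 * m : ℝ) ^ 4 * N ≤ ∑ f, (cnt (Q f) : ℝ) := by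
    have e1 : ∑ f, (cnt (Q f) : ℝ) = ∑ τ, (cnt (fun f => Q f τ) : ℝ) := by
      simp only [cnt_sum]
      exact sum_comm
    rw [e1]
    have e2 : (cnt (fun τ : Fin 4 → Fin m × Fin 4 => Function.Injective τ)) * (4 * c * N) ≤
        ∑ τ, (cnt (fun f => Q f τ) : ℝ) := by
      rw [cnt_sum, sum_mul]
      apply sum_le_sum
      intro τ _
      split_ifs with h
      · rw [one_mul]; exact key τ h
      · rw [zero_mul]; positivity
    refine le_trans ?_ e2
    have e3 := cnt_injective (Fin m × Fin 4) (by simp; omega)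
    rw [hs] at e3
    have e4 : (4 * m : ℝ) ^ 4 / 2 * (4 * c * N) ≤ cnt (fun τ : Fin 4 → Fin m × Fin 4 => Function.Injective τ) * (4 * c * N) := by
      gcongr
    linarith
  have up : ∑ f, (cnt (Q f) : ℝ) ≤ ∑ f : Fin m → Fin 4 → V, ((4 * m : ℝ) ^ 4 * (if c * (4 * m : ℝ) ^ 4 ≤ cnt (Q f) then 1 else 0) + c * (4 * m : ℝ) ^ 4) := by
    apply sum_le_sum
    intro f _
    split_ifs with h
    · have : (cnt (Q f) : ℝ) ≤ (4 * m : ℝ) ^ 4 := by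
        rw [← hs]
        have := cnt_le_univ (Q f)
        rw [Fintype.card_fun, Fintype.card_fin] at this
        exact_mod_cast this
      have : 0 ≤ c * (4 * m : ℝ) ^ 4 := by positivity
      linarith
    · linarith
  rw [sum_add_distrib, ← mul_sum, ← cnt_sum, sum_const, card_univ, nsmul_eq_mul, Fintype.card_fun, Fintype.card_fin] at up
  push_cast at up
  have h5 : (0:ℝ) < (4 * m : ℝ) ^ 4 := by positivity
  have : ((Fintype.card (Fin 4 → V) : ℕ) : ℝ) = (Fintype.card V : ℝ) ^ 4 := by simp
  rw [this] at hN
  have h6 : (4 * m : ℝ) ^ 4 * (c * N) ≤ (4 * m : ℝ) ^ 4 * cnt (fun f => c * (4 * m : ℝ) ^ 4 ≤ cnt (Q f)) := by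
    simp only [Fintype.card_fun, Fintype.card_fin] at up
    push_cast at up
    rw [← hN] at up
    linarith
  exact le_of_mul_le_mul_left h6 h5

lemma cnt_notinj [Fintype V] [Nonempty V] :
    (cnt (fun f : Fin m → Fin 4 → V => ¬ Function.Injective (fl f)) : ℝ) ≤
      (4 * m : ℝ) ^ 2 * ((Fintype.card (Fin 4 → V) : ℝ) ^ m / Fintype.card V) := by
  have hn : (0:ℝ) < Fintype.card V := by exact_mod_cast Fintype.card_pos
  have h1 : cnt (fun f : Fin m → Fin 4 → V => ¬ Function.Injective (fl f)) ≤ 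
    cnt (fun f : Fin m → Fin 4 → V => ∃ p : (Fin m × Fin 4) × (Fin m × Fin 4), p.1 ≠ p.2 ∧ fl f p.1 = fl f p.2) := by
    apply cnt_mono
    intro f hf
    unfold Function.Injective at hf
    push Not at hf
    obtain ⟨a, b, h1, h2⟩ := hf
    exact ⟨(a, b), h2, h1⟩
  have h2 := cnt_exists (fun (f : Fin m → Fin 4 → V) (p : (Fin m × Fin 4) × (Fin m × Fin 4)) => p.1 ≠ p.2 ∧ fl f p.1 = fl f p.2)
    ((Fintype.card (Fin 4 → V) : ℝ) ^ m / Fintype.card V) ?_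
  · refine (Nat.cast_le.2 h1).trans (h2.trans (le_of_eq ?_))
    simp; ring
  · rintro ⟨p, q⟩
    by_cases hpq : p = q
    · have : cnt (fun f : Fin m → Fin 4 → V => p ≠ q ∧ fl f p = fl f q) = 0 := by
        unfold cnt; simp [hpq]
      simp only [this]; simp; positivity
    · have h3 := count_fl (V := V) (fun i : Fin 2 => if i = 0 then p else q) (by
        intro i j hij
        fin_cases i <;> fin_cases j <;> simp_all [eq_comm]) (fun ω => ω 0 = ω 1)
      have h4 : cnt (fun ω : Fin 2 → V => ω 0 = ω 1) ≤ Fintype.card V := by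
        unfold cnt
        rw [← card_univ]
        apply card_le_card_of_injOn (fun ω => ω 0) (fun _ _ => by simp)
        intro a ha b hb h
        simp only [coe_filter, mem_univ, true_and, Set.mem_ofPred_eq] at ha hb
        funext i
        fin_cases i
        · exact h
        · simp only [Fin.mk_one]
          rw [← ha, ← hb]; exact h
      rw [Fintype.card_fin] at h3
      have h5 : cnt (fun f : Fin m → Fin 4 → V => p ≠ q ∧ fl f p = fl f q) ≤ 
        cnt (fun f : Fin m → Fin 4 → V => (fun ω : Fin 2 → V => ω 0 = ω 1) (fl f ∘ fun i : Fin 2 => if i = 0 then p else q)) := by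
        apply cnt_mono
        intro f hf
        simpa using hf.2
      rw [le_div_iff₀ hn]
      refine le_of_mul_le_mul_right ?_ hn
      have h6 : cnt (fun f : Fin m → Fin 4 → V => p ≠ q ∧ fl f p = fl f q) * Fintype.card V ^ 2 ≤ Fintype.card V * Fintype.card (Fin 4 → V) ^ m := by
        refine le_trans (Nat.mul_le_mul_right _ h5) (h3.le.trans ?_)
        exact Nat.mul_le_mul_right _ h4
      have h7 : (cnt (fun f : Fin m → Fin 4 → V => p ≠ q ∧ fl f p = fl f q) : ℝ) * (Fintype.card V : ℝ) ^ 2 ≤ Fintype.card V * (Fintype.card (Fin 4 → V) : ℝ) ^ m := by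
        exact_mod_cast h6
      linarith

lemma Hyp.bad_inj (H : Hyp V) {S : Type} (g : S → V) (τ : Fin 4 → S) (h : H.Bad (g (τ 0)) (g (τ 1)) (g (τ 2)) (g (τ 3))) :
    Function.Injective τ := by
  obtain ⟨h1, h2, h3, h4, h5⟩ := h
  have a1 := H.ne12 _ _ _ h1
  have a2 := H.ne13 _ _ _ h1
  have a3 := H.ne23 _ _ _ h1
  have a4 := H.ne13 _ _ _ h2
  have a5 := H.ne23 _ _ _ h2
  intro i j hij
  fin_cases i <;> fin_cases j <;> simp_all

noncomputable def Hyp.nbad [Fintype V] (H : Hyp V) : ℕ :=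
  cnt (fun ω : Fin 4 → V => H.Bad (ω 0) (ω 1) (ω 2) (ω 3))

lemma cnt_bad [Fintype V] [Nonempty V] (H : Hyp V) (δ : ℝ) (hδ : (H.nbad : ℝ) ≤ δ * (Fintype.card V : ℝ) ^ 4) :
    (cnt (fun f : Fin m → Fin 4 → V => Function.Injective (fl f) ∧ ∃ τ : Fin 4 → Fin m × Fin 4, (H.comap (fl f)).Bad (τ 0) (τ 1) (τ 2) (τ 3)) : ℝ) ≤
      (4 * m : ℝ) ^ 4 * (δ * (Fintype.card (Fin 4 → V) : ℝ) ^ m) := by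
  have hn : (0:ℝ) < (Fintype.card V : ℝ)^4 := by have := Fintype.card_pos (α := V); positivity
  have hδ0 : 0 ≤ δ := by
    by_contra h
    push Not at h
    have := mul_neg_of_neg_of_pos h hn
    have : (0:ℝ) ≤ H.nbad := by positivity
    linarith
  have h2 := cnt_exists (fun (f : Fin m → Fin 4 → V) (τ : Fin 4 → Fin m × Fin 4) => H.Bad (fl f (τ 0)) (fl f (τ 1)) (fl f (τ 2)) (fl f (τ 3)))
    (δ * (Fintype.card (Fin 4 → V) : ℝ) ^ m) ?_
  · refine le_trans (Nat.cast_le.2 (cnt_mono ?_)) (h2.trans (le_of_eq ?_))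
    · rintro f ⟨hf, τ, hτ⟩
      refine ⟨τ, ?_⟩
      obtain ⟨h1, h2, h3, h4, h5⟩ := hτ
      exact ⟨h1, h2, hf.ne h3, h4, h5⟩
    · rw [Fintype.card_fun, Fintype.card_prod, Fintype.card_fin, Fintype.card_fin]; push_cast; ring
  · intro τ
    by_cases hτ : Function.Injective τ
    · have h3 := count_fl (V := V) τ hτ (fun ω => H.Bad (ω 0) (ω 1) (ω 2) (ω 3))
      rw [Fintype.card_fin] at h3
      have h4 : (cnt (fun f : Fin m → Fin 4 → V => H.Bad (fl f (τ 0)) (fl f (τ 1)) (fl f (τ 2)) (fl f (τ 3))) : ℝ) * (Fintype.card V : ℝ)^4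
         = H.nbad * (Fintype.card (Fin 4 → V) : ℝ) ^ m := by exact_mod_cast h3
      refine le_of_mul_le_mul_right ?_ hn
      rw [h4]
      calc _ ≤ δ * (Fintype.card V : ℝ) ^ 4 * (Fintype.card (Fin 4 → V) : ℝ) ^ m := by gcongr
        _ = _ := by ring
    · have : cnt (fun f : Fin m → Fin 4 → V => H.Bad (fl f (τ 0)) (fl f (τ 1)) (fl f (τ 2)) (fl f (τ 3))) = 0 := by
        unfold cnt
        rw [card_eq_zero, filter_eq_empty_iff]
        intro f _ hf
        exact hτ (H.bad_inj (fl f) τ hf)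
      rw [this]
      simp; positivity

end D2R
end RemovalCut2


section RemovalCut3
open scoped Classical
set_option linter.unusedVariables false

namespace D2R

variable {V : Type} {m : ℕ}

lemma cut_sample_all [Fintype V] [Nonempty V] (G : Hyp V) (α c γ : ℝ) (hα : 0 < α) (hc : 0 < c) (hγ : 0 ≤ γ)
    (hγα : γ ≤ α / 4) (hγc : γ ≤ c / 8) (hm : 8 ≤ m) (hαm : 8 ≤ α * m) (hcm : 16 ≤ c * m) :
    (cnt (fun f : Fin m → Fin 4 → V => ∃ τ : Fin 4 → Fin m × Fin 4, Function.Injective (fl f) ∧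
      (G.comap (fl f)).SGood (τ 0) (τ 1) (τ 2) (τ 3) (4 * α * m) (2 * c * m) ∧
      ¬ G.VGood α c γ (fl f (τ 0)) (fl f (τ 1)) (fl f (τ 2)) (fl f (τ 3))) : ℝ) ≤
      (4 * m : ℝ) ^ 4 * (5 * ((Real.exp (-γ)) ^ (m - 4) * (Fintype.card (Fin 4 → V) : ℝ) ^ m)) := by
  refine (cnt_exists (fun (f : Fin m → Fin 4 → V) (τ : Fin 4 → Fin m × Fin 4) => Function.Injective (fl f) ∧
      (G.comap (fl f)).SGood (τ 0) (τ 1) (τ 2) (τ 3) (4 * α * m) (2 * c * m) ∧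
      ¬ G.VGood α c γ (fl f (τ 0)) (fl f (τ 1)) (fl f (τ 2)) (fl f (τ 3)))
    (5 * ((Real.exp (-γ)) ^ (m - 4) * (Fintype.card (Fin 4 → V) : ℝ) ^ m)) ?_).trans (le_of_eq ?_)
  · intro τ
    exact cut_sample G α c γ hα hc hγ hγα hγc hm hαm hcm (τ 0) (τ 1) (τ 2) (τ 3)
  rw [Fintype.card_fun, Fintype.card_prod, Fintype.card_fin, Fintype.card_fin]; push_cast; ring

lemma sample_cut [Fintype V] [Nonempty V] (H : Hyp V) (m : ℕ) (α c γ δ : ℝ) (hα : 0 < α) (hαc : 8 * α < c)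
    (hγ : 0 ≤ γ) (hγα : γ ≤ α / 4) (hm : 8 ≤ m) (hαm : 8 ≤ α * m)
    (hM : 4 * c * (Fintype.card V : ℝ) ^ 4 ≤ H.mix)
    (hδ : (H.nbad : ℝ) ≤ δ * (Fintype.card V : ℝ) ^ 4)
    (htot : (4 * m : ℝ) ^ 2 / Fintype.card V + (4 * m : ℝ) ^ 4 * δ +
      10 * (4 * m : ℝ) ^ 4 * (Real.exp (-γ)) ^ (m - 4) < c) :
    ∃ v x0 x1 y0, H.VGood α c γ v x0 x1 y0 ∨ H.compl.VGood α c γ v x0 x1 y0 := by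
  by_contra hcon
  push Not at hcon
  have hc : 0 < c := by linarith
  have hm0 : (8:ℝ) ≤ m := by exact_mod_cast hm
  have hcm : 64 ≤ c * m := by nlinarith
  have hγc : γ ≤ c / 8 := by linarith
  have b0 := many_mixed (m := m) H c hc (by omega) hM
  have b1 := cnt_notinj (V := V) (m := m)
  have b2 := cnt_bad (m := m) H δ hδ
  have b3 := cut_sample_all (m := m) H α c γ hα hc hγ hγα hγc hm hαm (by linarith)
  have b4 := cut_sample_all (m := m) H.compl α c γ hα hc hγ hγα hγc hm hαm (by linarith)
  have b5 := (cnt_mono (P := fun f : Fin m → Fin 4 → V =>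
      c * (4 * m : ℝ) ^ 4 ≤ cnt (fun τ : Fin 4 → Fin m × Fin 4 => 
        H.r (fl f (τ 0)) (fl f (τ 1)) (fl f (τ 2)) ∧ H.compl.r (fl f (τ 0)) (fl f (τ 1)) (fl f (τ 3))))
      (Q := fun f => (¬ Function.Injective (fl f)) ∨ ((Function.Injective (fl f) ∧ ∃ τ : Fin 4 → Fin m × Fin 4, (H.comap (fl f)).Bad (τ 0) (τ 1) (τ 2) (τ 3)) ∨ 
        ((∃ τ : Fin 4 → Fin m × Fin 4, Function.Injective (fl f) ∧
      (H.comap (fl f)).SGood (τ 0) (τ 1) (τ 2) (τ 3) (4 * α * m) (2 * c * m) ∧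
      ¬ H.VGood α c γ (fl f (τ 0)) (fl f (τ 1)) (fl f (τ 2)) (fl f (τ 3))) ∨ 
        (∃ τ : Fin 4 → Fin m × Fin 4, Function.Injective (fl f) ∧
      (H.compl.comap (fl f)).SGood (τ 0) (τ 1) (τ 2) (τ 3) (4 * α * m) (2 * c * m) ∧
      ¬ H.compl.VGood α c γ (fl f (τ 0)) (fl f (τ 1)) (fl f (τ 2)) (fl f (τ 3)))))) ?_)
  · have b6 := b5.trans ((cnt_or _ _).trans (Nat.add_le_add_left
      ((cnt_or _ _).trans (Nat.add_le_add_left (cnt_or _ _) _)) _))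
    have b7 := b0.trans (Nat.cast_le.2 b6)
    push_cast at b7 b1 b2 b3 b4
    set N : ℝ := (Fintype.card (Fin 4 → V) : ℝ) ^ m with hN
    have hN0 : 0 < N := by have := Fintype.card_pos (α := Fin 4 → V); positivity
    have h1 := mul_lt_mul_of_pos_right htot hN0
    have h2 : ((4 * m : ℝ) ^ 2 / Fintype.card V + (4 * m : ℝ) ^ 4 * δ +
      10 * (4 * m : ℝ) ^ 4 * (Real.exp (-γ)) ^ (m - 4)) * N = 
      (4 * m : ℝ) ^ 2 * (N / Fintype.card V) + ((4 * m : ℝ) ^ 4 * (δ * N) + (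
      (4 * m : ℝ) ^ 4 * (5 * ((Real.exp (-γ)) ^ (m - 4) * N)) + (4 * m : ℝ) ^ 4 * (5 * ((Real.exp (-γ)) ^ (m - 4) * N)))) := by ring
    linarith
  · intro f hf
    by_cases hinj : Function.Injective (fl f)
    swap
    · exact Or.inl hinj
    right
    by_cases hbad : ∃ τ : Fin 4 → Fin m × Fin 4, (H.comap (fl f)).Bad (τ 0) (τ 1) (τ 2) (τ 3)
    · exact Or.inl ⟨hinj, hbad⟩
    right
    have hfree : ∀ a b c d, ¬ (H.comap (fl f)).Bad a b c d := by
      intro a b c d h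
      exact hbad ⟨![a, b, c, d], h⟩
    have hcard : (Fintype.card (Fin m × Fin 4) : ℝ) = 4 * m := by simp; ring
    have : Nonempty (Fin m × Fin 4) := ⟨(⟨0, by omega⟩, 0)⟩
    obtain ⟨v, hv1, hv2⟩ := mixed_vertex (H.comap (fl f)) c (by
      rw [hcard]
      refine hf.trans (Nat.cast_le.2 (cnt_mono ?_))
      intro τ hτ
      refine ⟨hτ.1, ?_⟩
      rw [comap_mixed H (fl f) hinj]
      exact hτ.2)
    have hs : (0:ℝ) < 4 * m := by linarith
    have hlt : (4 * m : ℝ) * (2 * c * m + 4 * (4 * α * m)) < c * (4 * m : ℝ) ^ 2 := by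
      have : 0 < (c - 8 * α) * (m * m) := by
        apply mul_pos (by linarith) (by positivity)
      nlinarith
    rw [hcard] at hv1 hv2
    have := Hyp.exact_main (H.comap (fl f)) hfree v (4 * α * m) (2 * c * m) (by linarith) (by linarith)
      (by rw [cnt_eq, hcard]; linarith) (by rw [cnt_eq, hcard]; linarith)
    rcases this with ⟨x0, x1, y0, h⟩ | ⟨x0, x1, y0, h⟩
    · left
      exact ⟨![v, x0, x1, y0], hinj, h, (hcon _ _ _ _).1⟩
    · right
      rw [← H.comap_compl (fl f) hinj] at h
      exact ⟨![v, x0, x1, y0], hinj, h, (hcon _ _ _ _).2⟩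

noncomputable def Hyp.ne [Fintype V] (H : Hyp V) : ℕ := cnt (fun p : V × V × V => H.r p.1 p.2.1 p.2.2)

lemma cnt_eq_pair [Fintype V] : cnt (fun ω : Fin 2 → V => ω 0 = ω 1) ≤ Fintype.card V := by
  unfold cnt
  rw [← card_univ]
  apply card_le_card_of_injOn (fun ω => ω 0) (fun _ _ => by simp)
  intro a ha b hb h
  simp only [coe_filter, mem_univ, true_and, Set.mem_ofPred_eq] at ha hb
  funext i
  fin_cases i
  · exact h
  · simp only [Fin.mk_one]
    rw [← ha, ← hb]; exact h

lemma switching [Fintype V] [Nonempty V] (H : Hyp V) :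
    (H.ne : ℝ) * H.compl.ne ≤ 3 * H.mix * (Fintype.card V : ℝ) ^ 2 + 3 * (Fintype.card V : ℝ) ^ 5 := by
  set n : ℝ := (Fintype.card V : ℝ) with hn
  have hn0 : 0 < n := by rw [hn]; exact_mod_cast Fintype.card_pos
  have hmix : ∀ e : Fin 4 → Fin 6, Function.Injective e → (cnt (fun t : Fin 6 → V => 
      H.r (t (e 0)) (t (e 1)) (t (e 2)) ∧ H.compl.r (t (e 0)) (t (e 1)) (t (e 3))) : ℝ) = H.mix * n ^ 2 := by
    intro e he
    have h := count_embed (V := V) e he (fun ω => H.r (ω 0) (ω 1) (ω 2) ∧ H.compl.r (ω 0) (ω 1) (ω 3))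
    rw [Fintype.card_fin, Fintype.card_fin] at h
    have h' : (cnt (fun t : Fin 6 → V => 
      H.r (t (e 0)) (t (e 1)) (t (e 2)) ∧ H.compl.r (t (e 0)) (t (e 1)) (t (e 3))) : ℝ) * n ^ 4 = H.mix * n ^ 6 := by
      rw [hn]; exact_mod_cast h
    have : n ^ 4 ≠ 0 := by positivity
    apply mul_right_cancel₀ this
    rw [h']; ring
  have heq : ∀ e : Fin 2 → Fin 6, Function.Injective e → (cnt (fun t : Fin 6 → V => t (e 0) = t (e 1)) : ℝ) ≤ n ^ 5 := by
    intro e he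
    have h := count_embed (V := V) e he (fun ω => ω 0 = ω 1)
    rw [Fintype.card_fin, Fintype.card_fin] at h
    have h' : (cnt (fun t : Fin 6 → V => t (e 0) = t (e 1)) : ℝ) * n ^ 2 ≤ n ^ 5 * n ^ 2 := by
      calc _ = (cnt (fun ω : Fin 2 → V => ω 0 = ω 1) : ℝ) * n ^ 6 := by rw [hn]; exact_mod_cast h
        _ ≤ n * n ^ 6 := by gcongr; rw [hn]; exact_mod_cast cnt_eq_pair
        _ = _ := by ring
    exact le_of_mul_le_mul_right h' (by positivity)
  have h1 : H.ne * H.compl.ne ≤ cnt (fun t : Fin 6 → V => H.r (t 0) (t 1) (t 2) ∧ H.compl.r (t 3) (t 4) (t 5)) := by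
    unfold Hyp.ne
    rw [← cnt_prod]
    refine cnt_inj (fun p => ![p.1.1, p.1.2.1, p.1.2.2, p.2.1, p.2.2.1, p.2.2.2]) ?_ (fun p hp => hp)
    rintro ⟨⟨a, b, c⟩, ⟨a', b', c'⟩⟩ ⟨⟨x, y, z⟩, ⟨x', y', z'⟩⟩ h
    have e0 := congrFun h 0
    have e1 := congrFun h 1
    have e2 := congrFun h 2
    have e3 := congrFun h 3
    have e4 := congrFun h 4
    have e5 := congrFun h 5
    simp at e0 e1 e2 e3 e4 e5
    simp [*]
  have h2 := h1.trans ((cnt_mono (Q := fun t : Fin 6 → V => 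
    (H.r (t 1) (t 2) (t 0) ∧ H.compl.r (t 1) (t 2) (t 3)) ∨ 
    ((H.r (t 3) (t 2) (t 1) ∧ H.compl.r (t 3) (t 2) (t 4)) ∨ 
    ((H.r (t 3) (t 4) (t 2) ∧ H.compl.r (t 3) (t 4) (t 5)) ∨ 
    (t 3 = t 1 ∨ (t 3 = t 2 ∨ t 4 = t 2))))) ?_).trans 
    ((cnt_or _ _).trans (Nat.add_le_add_left
      ((cnt_or _ _).trans (Nat.add_le_add_left ((cnt_or _ _).trans (Nat.add_le_add_left
      ((cnt_or _ _).trans (Nat.add_le_add_left (cnt_or _ _) _)) _)) _)) _)))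
  · have h3 := (Nat.cast_le (α := ℝ)).2 h2
    push_cast at h3
    have k1 := hmix ![1, 2, 0, 3] (by decide)
    have k2 := hmix ![3, 2, 1, 4] (by decide)
    have k3 := hmix ![3, 4, 2, 5] (by decide)
    have k4 := heq ![3, 1] (by decide)
    have k5 := heq ![3, 2] (by decide)
    have k6 := heq ![4, 2] (by decide)
    simp at k1 k2 k3 k4 k5 k6
    rw [k1, k2, k3] at h3
    linarith
  · rintro t ⟨q1, q2⟩
    by_contra hq
    push Not at hq
    obtain ⟨a1, a2, a3, b1, b2, b3⟩ := hq
    have s12 := H.s12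
    have s23 := H.s23
    have n12 := H.ne23 _ _ _ q1
    simp only [Hyp.compl] at q2 a1 a2 a3
    obtain ⟨c1, c2, c3, c4⟩ := q2
    have d1 : H.r (t 1) (t 2) (t 3) := by
      by_contra h
      exact a1 (s23 _ _ _ (s12 _ _ _ q1)) ⟨n12, Ne.symm b1, Ne.symm b2, h⟩
    have d2 : H.r (t 3) (t 2) (t 4) := by
      by_contra h
      exact a2 (s12 _ _ _ (s23 _ _ _ (s12 _ _ _ d1))) ⟨b2, c1, Ne.symm b3, h⟩
    exact a3 (s23 _ _ _ d2) ⟨c1, c2, c3, c4⟩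

end D2R
end RemovalCut3

section RemovalCut4
open scoped Classical
set_option linter.unusedVariables false

namespace D2R

variable {V : Type}

noncomputable def Hyp.cross [Fintype V] (H : Hyp V) (Y : V → Prop) : ℕ :=
  cnt (fun p : V × V × V => H.r p.1 p.2.1 p.2.2 ∧ ¬ (Y p.1 ∧ Y p.2.1 ∧ Y p.2.2) ∧
    ¬ (¬ Y p.1 ∧ ¬ Y p.2.1 ∧ ¬ Y p.2.2))

lemma cs_count {P X : Type} [Fintype P] [Fintype X] (A : P → X → Prop) (κ : ℝ) (hκ : 0 < κ) :
    (cnt (fun q : P × X => A q.1 q.2) : ℝ) ≤ κ * Fintype.card P +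
      (cnt (fun q : P × (X × X) => A q.1 q.2.1 ∧ A q.1 q.2.2) : ℝ) / κ := by
  rw [cnt_fiber, cnt_fiber]
  have h : ∀ p : P, (cnt (fun x : X => A p x) : ℝ) ≤ κ +
      (cnt (fun q : X × X => A p q.1 ∧ A p q.2) : ℝ) / κ := by
    intro p
    rw [cnt_prod (fun x => A p x) (fun x => A p x)]
    push_cast
    set f : ℝ := (cnt (fun x : X => A p x) : ℝ) with hf
    rw [← sub_nonneg]
    have : κ + f * f / κ - f = ((f - κ / 2) ^ 2 + 3 / 4 * κ ^ 2) / κ := by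
      field_simp; ring
    rw [this]; positivity
  push_cast
  refine (Finset.sum_le_sum (fun p _ => h p)).trans (le_of_eq ?_)
  rw [Finset.sum_add_distrib, Finset.sum_div]
  simp
  ring

lemma xyy_bound [Fintype V] [Nonempty V] (G : Hyp V) (X Y : V → Prop) (κ : ℝ) (hκ : 0 < κ)
    (hn : 1 ≤ κ ^ 2 * Fintype.card V)
    (h : (cnt (fun ω : Fin 4 → V => X (ω 0) ∧ X (ω 1) ∧ Y (ω 2) ∧ Y (ω 3) ∧ ω 0 ≠ ω 1 ∧ G.r (ω 0) (ω 2) (ω 3) ∧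
      G.r (ω 1) (ω 2) (ω 3)) : ℝ) ≤ κ ^ 2 * Fintype.card (Fin 4 → V)) :
    (cnt (fun p : V × V × V => X p.1 ∧ Y p.2.1 ∧ Y p.2.2 ∧ G.r p.1 p.2.1 p.2.2) : ℝ) ≤
      3 * κ * (Fintype.card V : ℝ) ^ 3 := by
  have hn0 : (0:ℝ) < Fintype.card V := by exact_mod_cast Fintype.card_pos
  have h1 := cs_count (fun (p : V × V) (x : V) => X x ∧ Y p.1 ∧ Y p.2 ∧ G.r x p.1 p.2)
    (κ * Fintype.card V) (by positivity)
  have h2 : cnt (fun p : V × V × V => X p.1 ∧ Y p.2.1 ∧ Y p.2.2 ∧ G.r p.1 p.2.1 p.2.2) ≤ 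
      cnt (fun q : (V × V) × V => X q.2 ∧ Y q.1.1 ∧ Y q.1.2 ∧ G.r q.2 q.1.1 q.1.2) := by
    refine cnt_inj (fun p => ((p.2.1, p.2.2), p.1)) ?_ (fun p hp => hp)
    rintro ⟨a, b, c⟩ ⟨a', b', c'⟩ h
    simp at h ⊢; tauto
  have h3 : cnt (fun q : (V × V) × (V × V) => (X q.2.1 ∧ Y q.1.1 ∧ Y q.1.2 ∧ G.r q.2.1 q.1.1 q.1.2) ∧ 
       (X q.2.2 ∧ Y q.1.1 ∧ Y q.1.2 ∧ G.r q.2.2 q.1.1 q.1.2)) ≤ 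
      cnt (fun ω : Fin 4 → V => X (ω 0) ∧ X (ω 1) ∧ Y (ω 2) ∧ Y (ω 3) ∧ ω 0 ≠ ω 1 ∧ G.r (ω 0) (ω 2) (ω 3) ∧
      G.r (ω 1) (ω 2) (ω 3)) + Fintype.card (V × V × V) := by
    refine (cnt_mono (Q := fun q => ((X q.2.1 ∧ Y q.1.1 ∧ Y q.1.2 ∧ G.r q.2.1 q.1.1 q.1.2) ∧ 
       (X q.2.2 ∧ Y q.1.1 ∧ Y q.1.2 ∧ G.r q.2.2 q.1.1 q.1.2) ∧ q.2.1 ≠ q.2.2) ∨ q.2.1 = q.2.2) ?_).trans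
       ((cnt_or _ _).trans (Nat.add_le_add ?_ ?_))
    · intro q hq; tauto
    · refine cnt_inj (fun q => ![q.2.1, q.2.2, q.1.1, q.1.2]) ?_ ?_
      · rintro ⟨⟨a, b⟩, c, d⟩ ⟨⟨a', b'⟩, c', d'⟩ h
        have e0 := congrFun h 0
        have e1 := congrFun h 1
        have e2 := congrFun h 2
        have e3 := congrFun h 3
        simp at e0 e1 e2 e3
        simp [*]
      · rintro q ⟨⟨a1, a2, a3, a4⟩, ⟨b1, b2, b3, b4⟩, c⟩
        exact ⟨a1, b1, a2, a3, c, a4, b4⟩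
    · unfold cnt
      rw [← card_univ]
      apply card_le_card_of_injOn (fun q => (q.1.1, q.1.2, q.2.1)) (fun _ _ => by simp)
      rintro ⟨⟨a, b⟩, c, d⟩ ha ⟨⟨a', b'⟩, c', d'⟩ hb h
      simp at ha hb h
      subst ha hb
      simp; tauto
  have h2' : (cnt (fun p : V × V × V => X p.1 ∧ Y p.2.1 ∧ Y p.2.2 ∧ G.r p.1 p.2.1 p.2.2) : ℝ) ≤ 
      cnt (fun q : (V × V) × V => X q.2 ∧ Y q.1.1 ∧ Y q.1.2 ∧ G.r q.2 q.1.1 q.1.2) := by exact_mod_cast h2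
  have h3' := (Nat.cast_le (α := ℝ)).2 h3
  push_cast at h3'
  simp only [Fintype.card_prod, Fintype.card_fun, Fintype.card_fin] at h3' h1 h
  push_cast at h3' h1 h
  set n : ℝ := (Fintype.card V : ℝ) with hnd
  refine h2'.trans (h1.trans ?_)
  have h4 := h3'.trans (add_le_add_left h _)
  have h5 : κ ^ 2 * n ^ 4 + n * (n * n) ≤ 2 * κ * n ^ 3 * (κ * n) := by
    have : n ^ 3 * 1 ≤ n ^ 3 * (κ ^ 2 * n) := by gcongr
    nlinarith
  have h6 := (div_le_iff₀ (show 0 < κ * n by positivity)).2 (h4.trans h5)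
  nlinarith [h6]

lemma cross_le [Fintype V] (G : Hyp V) (Y : V → Prop) :
    G.cross Y ≤ 3 * (cnt (fun p : V × V × V => ¬ Y p.1 ∧ ¬ Y p.2.1 ∧ Y p.2.2 ∧ G.r p.1 p.2.1 p.2.2)
     + cnt (fun p : V × V × V => ¬ Y p.1 ∧ Y p.2.1 ∧ Y p.2.2 ∧ G.r p.1 p.2.1 p.2.2)) := by
  have rot : ∀ (P : V × V × V → Prop), cnt (fun p : V × V × V => P (p.2.1, p.2.2, p.1)) ≤ cnt P := by
    intro P
    refine cnt_inj (fun p => (p.2.1, p.2.2, p.1)) ?_ (fun p hp => hp)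
    rintro ⟨a, b, c⟩ ⟨a', b', c'⟩ h
    simp at h ⊢; tauto
  set A : V × V × V → Prop := fun p : V × V × V => ¬ Y p.1 ∧ ¬ Y p.2.1 ∧ Y p.2.2 ∧ G.r p.1 p.2.1 p.2.2 with hA
  set B : V × V × V → Prop := fun p : V × V × V => ¬ Y p.1 ∧ Y p.2.1 ∧ Y p.2.2 ∧ G.r p.1 p.2.1 p.2.2 with hB
  have r1 := rot A
  have r2 := (rot (fun p : V × V × V => A (p.2.1, p.2.2, p.1))).trans r1
  have s1 := rot B
  have s2 := (rot (fun p : V × V × V => B (p.2.1, p.2.2, p.1))).trans s1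
  have := cnt_mono (P := fun p : V × V × V => G.r p.1 p.2.1 p.2.2 ∧ ¬ (Y p.1 ∧ Y p.2.1 ∧ Y p.2.2) ∧
    ¬ (¬ Y p.1 ∧ ¬ Y p.2.1 ∧ ¬ Y p.2.2)) (Q := fun p => (A p ∨ (A (p.2.1, p.2.2, p.1) ∨ A (p.2.2, p.1, p.2.1))) ∨ 
      (B p ∨ (B (p.2.1, p.2.2, p.1) ∨ B (p.2.2, p.1, p.2.1)))) (by
      rintro ⟨a, b, c⟩ ⟨h1, h2, h3⟩
      have e1 := G.s23 _ _ _ (G.s12 _ _ _ h1)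
      have e2 := G.s23 _ _ _ (G.s12 _ _ _ e1)
      simp only [hA, hB]
      clear rot r1 r2 s1 s2
      by_cases y1 : Y a <;> by_cases y2 : Y b <;> by_cases y3 : Y c <;> simp_all)
  have o1 := cnt_or (fun p : V × V × V => (A p ∨ (A (p.2.1, p.2.2, p.1) ∨ A (p.2.2, p.1, p.2.1)))) (fun p : V × V × V =>
      (B p ∨ (B (p.2.1, p.2.2, p.1) ∨ B (p.2.2, p.1, p.2.1))))
  have o2 := cnt_or A (fun p : V × V × V => (A (p.2.1, p.2.2, p.1) ∨ A (p.2.2, p.1, p.2.1)))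
  have o3 := cnt_or (fun p : V × V × V => A (p.2.1, p.2.2, p.1)) (fun p : V × V × V => A (p.2.2, p.1, p.2.1))
  have o4 := cnt_or B (fun p : V × V × V => (B (p.2.1, p.2.2, p.1) ∨ B (p.2.2, p.1, p.2.1)))
  have o5 := cnt_or (fun p : V × V × V => B (p.2.1, p.2.2, p.1)) (fun p : V × V × V => B (p.2.2, p.1, p.2.1))
  unfold Hyp.cross
  simp only at r1 r2 s1 s2
  omega

lemma vgood_cross [Fintype V] [Nonempty V] (G : Hyp V) (η α c κ : ℝ) (hη : 0 < η) (hα : 0 < α) (hc : 0 < c)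
    (hκ : 0 < κ) (hκ1 : κ ≤ 1) (hn : 1 ≤ κ ^ 2 * Fintype.card V) (hα' : 2 ^ 11 * α ≤ η * c)
    (hκ' : 2 ^ 10 * κ ≤ η * α * c) (v x0 x1 y0 : V) (h : G.VGood α c (κ ^ 2) v x0 x1 y0) :
    ∃ Y : V → Prop, (∃ u, Y u) ∧ (∃ u, ¬ Y u) ∧ 
      (G.cross Y : ℝ) ≤ 3 * η * cnt Y * cnt (fun u => ¬ Y u) * Fintype.card V := by
  have hn0 : (0:ℝ) < Fintype.card V := by exact_mod_cast Fintype.card_pos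
  obtain ⟨g1, g2, g3, g4, g5⟩ := h
  have hdis : ∀ u, G.Xp v x0 x1 y0 u → ¬ G.Yp v x0 x1 u := by
    intro u h1 h2
    exact h2.2 h1.1
  generalize G.Xp v x0 x1 y0 = X at *
  generalize G.Yp v x0 x1 = Y at *
  have gZ : (cnt X : ℝ) ≤ cnt (fun u => ¬ Y u) := by exact_mod_cast cnt_mono hdis
  have pos : ∀ P : V → Prop, (0:ℝ) < cnt P → ∃ u, P u := by
    intro P hP
    have : 0 < cnt P := by exact_mod_cast hP
    unfold cnt at this
    obtain ⟨u, hu⟩ := card_pos.1 this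
    exact ⟨u, by simpa using hu⟩
  refine ⟨Y, pos _ (lt_of_lt_of_le (by positivity) g3), pos _ (lt_of_lt_of_le (by positivity) (g2.trans gZ)), ?_⟩
  have b5 := xyy_bound G X Y κ hκ hn g5
  have b4 : (cnt (fun p : V × V × V => X p.1 ∧ X p.2.1 ∧ Y p.2.2 ∧ G.r p.1 p.2.1 p.2.2) : ℝ) ≤ 
      κ ^ 2 * (Fintype.card V : ℝ) ^ 3 := by
    have := cnt_inj (P := fun q : (V × V × V) × V => (X q.1.1 ∧ X q.1.2.1 ∧ Y q.1.2.2 ∧ G.r q.1.1 q.1.2.1 q.1.2.2) ∧ True)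
      (Q := fun ω : Fin 4 → V => X (ω 0) ∧ X (ω 1) ∧ Y (ω 2) ∧ G.r (ω 0) (ω 1) (ω 2))
      (fun q => ![q.1.1, q.1.2.1, q.1.2.2, q.2]) (by
        rintro ⟨⟨a, b, c⟩, d⟩ ⟨⟨a', b', c'⟩, d'⟩ h
        have e0 := congrFun h 0
        have e1 := congrFun h 1
        have e2 := congrFun h 2
        have e3 := congrFun h 3
        simp at e0 e1 e2 e3
        simp [*]) (fun q hq => hq.1)
    rw [cnt_prod (fun p : V × V × V => X p.1 ∧ X p.2.1 ∧ Y p.2.2 ∧ G.r p.1 p.2.1 p.2.2) (fun _ : V => True)] at this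
    have ht : cnt (fun _ : V => True) = Fintype.card V := by unfold cnt; simp
    rw [ht] at this
    have := ((Nat.cast_le (α := ℝ)).2 this).trans g4
    rw [Fintype.card_fun, Fintype.card_fin] at this
    push_cast at this
    refine le_of_mul_le_mul_right (this.trans (le_of_eq ?_)) hn0
    ring
  have ht : cnt (fun _ : V => True) = Fintype.card V := by unfold cnt; simp
  let T : V → Prop := fun u => ¬ X u ∧ ¬ Y u
  have t1 : cnt (fun p : V × V × V => T p.1 ∧ True ∧ Y p.2.2) = cnt T * (Fintype.card V * cnt Y) := by
    rw [cnt_prod T (fun q : V × V => True ∧ Y q.2), cnt_prod (fun _ : V => True) Y, ht]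
  have t2 : cnt (fun p : V × V × V => True ∧ T p.2.1 ∧ Y p.2.2) = Fintype.card V * (cnt T * cnt Y) := by
    rw [cnt_prod (fun _ : V => True) (fun q : V × V => T q.1 ∧ Y q.2), cnt_prod T Y, ht]
  have zzy : cnt (fun p : V × V × V => ¬ Y p.1 ∧ ¬ Y p.2.1 ∧ Y p.2.2 ∧ G.r p.1 p.2.1 p.2.2) ≤ 
      cnt (fun p : V × V × V => X p.1 ∧ X p.2.1 ∧ Y p.2.2 ∧ G.r p.1 p.2.1 p.2.2) + 
      (cnt T * (Fintype.card V * cnt Y) + Fintype.card V * (cnt T * cnt Y)) := by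
    rw [← t1, ← t2]
    refine (cnt_mono ?_).trans ((cnt_or _ _).trans (Nat.add_le_add_left (cnt_or _ _) _))
    intro p hp
    simp only [T]; tauto
  have zyy : cnt (fun p : V × V × V => ¬ Y p.1 ∧ Y p.2.1 ∧ Y p.2.2 ∧ G.r p.1 p.2.1 p.2.2) ≤ 
      cnt (fun p : V × V × V => X p.1 ∧ Y p.2.1 ∧ Y p.2.2 ∧ G.r p.1 p.2.1 p.2.2) + 
      cnt T * (Fintype.card V * cnt Y) := by
    rw [← t1]
    refine (cnt_mono ?_).trans (cnt_or _ _)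
    intro p hp
    simp only [T]; tauto
  have cr := cross_le G Y
  have cr' := (Nat.cast_le (α := ℝ)).2 cr
  have zzy' := (Nat.cast_le (α := ℝ)).2 zzy
  have zyy' := (Nat.cast_le (α := ℝ)).2 zyy
  push_cast at cr' zzy' zyy'
  set n : ℝ := (Fintype.card V : ℝ) with hnd
  set y : ℝ := (cnt Y : ℝ) with hy
  set z : ℝ := (cnt (fun u => ¬ Y u) : ℝ) with hz
  have hT : (cnt T : ℝ) ≤ 16 * α * n := g1
  have hy0 : 0 ≤ y := by rw [hy]; positivity
  have hz0 : c / 16 * n ≤ z := g2.trans gZ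
  have k1 : (cnt T : ℝ) * (n * y) ≤ 16 * α * n * (n * y) := by gcongr
  have k2 : 48 * α * n ≤ η / 2 * z := by
    have : 48 * α ≤ η / 2 * (c / 16) := by linarith
    calc 48 * α * n ≤ η / 2 * (c / 16) * n := by gcongr
      _ = η / 2 * (c / 16 * n) := by ring
      _ ≤ _ := by gcongr
  have k3 : 48 * α * n * (n * y) ≤ η / 2 * z * (n * y) := by gcongr
  have k4 : (α / 8 * n) * (c / 16 * n) ≤ y * z := by gcongr
  have k5 : (4 * κ) * n ^ 3 ≤ η / 2 * (y * z) * n := by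
    calc (4 * κ) * n ^ 3 ≤ (η / 2 * (α / 8 * (c / 16))) * n ^ 3 := mul_le_mul_of_nonneg_right (by linarith) (by positivity)
      _ = η / 2 * ((α / 8 * n) * (c / 16 * n)) * n := by ring
      _ ≤ _ := by gcongr
  have k6 : κ ^ 2 * n ^ 3 ≤ κ * n ^ 3 := by gcongr; nlinarith
  nlinarith

end D2R
end RemovalCut4

section RemovalCut5
open scoped Classical
set_option linter.unusedVariables false

namespace D2R

variable {V : Type}

lemma tail_small (γ c : ℝ) (m : ℕ) (hγ : 0 < γ) (hc : 0 < c) (hm : 8 ≤ m) (h : 2 ^ 26 ≤ γ ^ 5 * c * m) :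
    10 * (4 * m : ℝ) ^ 4 * (Real.exp (-γ)) ^ (m - 4) ≤ c / 4 := by
  have hm0 : (8:ℝ) ≤ m := by exact_mod_cast hm
  have h1 : (Real.exp (-γ)) ^ (m - 4) ≤ (Real.exp (γ * m / 2))⁻¹ := by
    rw [← Real.exp_nat_mul, ← Real.exp_neg]
    apply Real.exp_le_exp.2
    rw [Nat.cast_sub (by omega)]
    push_cast
    nlinarith
  have h2 := Real.pow_div_factorial_le_exp (x := γ * m / 2) (by positivity) 5
  have h3 : (Real.exp (γ * m / 2))⁻¹ ≤ ((γ * m / 2) ^ 5 / (Nat.factorial 5 : ℝ))⁻¹ := by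
    apply inv_anti₀ (by positivity) h2
  calc 10 * (4 * m : ℝ) ^ 4 * (Real.exp (-γ)) ^ (m - 4) ≤ 10 * (4 * m : ℝ) ^ 4 * ((γ * m / 2) ^ 5 / (Nat.factorial 5 : ℝ))⁻¹ := by
        gcongr; exact h1.trans h3
    _ = 9830400 / (γ ^ 5 * m) := by
        have : (Nat.factorial 5 : ℝ) = 120 := by norm_num [Nat.factorial]
        rw [this]
        field_simp
        norm_num
    _ ≤ c / 4 := by
        rw [div_le_div_iff₀ (by positivity) (by positivity)]
        nlinarith

lemma mix_lower [Fintype V] [Nonempty V] (H : Hyp V) (η : ℝ) (hη : 0 < η) (hn : 12 ≤ η ^ 2 * Fintype.card V)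
    (h1 : η * (Fintype.card V : ℝ) ^ 3 ≤ H.ne) (h2 : η * (Fintype.card V : ℝ) ^ 3 ≤ H.compl.ne) :
    4 * (η ^ 2 / 16) * (Fintype.card V : ℝ) ^ 4 ≤ H.mix := by
  have hn0 : (0:ℝ) < Fintype.card V := by exact_mod_cast Fintype.card_pos
  have h3 := switching H
  set n : ℝ := (Fintype.card V : ℝ) with hnd
  have h4 : (η * n ^ 3) * (η * n ^ 3) ≤ H.ne * H.compl.ne := by gcongr
  have h5 : 12 * n ^ 5 ≤ (η ^ 2 * n) * n ^ 5 := by gcongr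
  refine le_of_mul_le_mul_right ?_ (show 0 < 3 * n ^ 2 by positivity)
  have h6 : 0 < η ^ 2 * n ^ 6 := by positivity
  nlinarith

set_option exponentiation.threshold 4000

lemma cut_lemma [Fintype V] [Nonempty V] (H : Hyp V) (η : ℝ) (hη : 0 < η) (hη1 : η ≤ 1)
    (hn : 2 ^ 1300 ≤ η ^ 250 * Fintype.card V)
    (hδ : (H.nbad : ℝ) ≤ η ^ 250 / 2 ^ 1300 * (Fintype.card V : ℝ) ^ 4) :
    (H.ne : ℝ) ≤ η * (Fintype.card V : ℝ) ^ 3 ∨ (H.compl.ne : ℝ) ≤ η * (Fintype.card V : ℝ) ^ 3 ∨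
    ∃ Y : V → Prop, (∃ u, Y u) ∧ (∃ u, ¬ Y u) ∧ 
      ((H.cross Y : ℝ) ≤ 3 * η * cnt Y * cnt (fun u => ¬ Y u) * Fintype.card V ∨ 
      (H.compl.cross Y : ℝ) ≤ 3 * η * cnt Y * cnt (fun u => ¬ Y u) * Fintype.card V) := by
  have hn0 : (0:ℝ) < Fintype.card V := by exact_mod_cast Fintype.card_pos
  by_cases q1 : (H.ne : ℝ) ≤ η * (Fintype.card V : ℝ) ^ 3
  · exact Or.inl q1
  right
  by_cases q2 : (H.compl.ne : ℝ) ≤ η * (Fintype.card V : ℝ) ^ 3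
  · exact Or.inl q2
  right
  have hp : ∀ k, k ≤ 250 → η ^ 250 ≤ η ^ k := fun k hk => pow_le_pow_of_le_one hη.le hη1 hk
  have hbig : ∀ k, k ≤ 250 → 2 ^ 1300 ≤ η ^ k * Fintype.card V := fun k hk =>
    hn.trans (by gcongr 1; exact hp k hk)
  have hmix := mix_lower H η hη ((by norm_num : (12:ℝ) ≤ 2 ^ 1300).trans (hbig 2 (by norm_num))) (not_le.1 q1).le (not_le.1 q2).le
  set M : ℝ := 2 ^ 320 / η ^ 62 with hM
  have hM1 : (2:ℝ) ^ 320 ≤ M := by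
    rw [hM, le_div_iff₀ (by positivity)]
    have : η ^ 62 ≤ 1 := pow_le_one₀ hη.le hη1
    have h2 : (0:ℝ) < 2 ^ 320 := by positivity
    nlinarith
  set m : ℕ := ⌈M⌉₊ with hm
  have hmM : M ≤ m := Nat.le_ceil _
  have hmM' : (m : ℝ) ≤ 2 * M := by
    have := (Nat.ceil_lt_add_one (show 0 ≤ M by positivity)).le
    have h1 : (1:ℝ) ≤ 2 ^ 320 := by norm_num
    linarith
  have hm8 : 8 ≤ m := by
    have : (8:ℝ) ≤ m := (by norm_num : (8:ℝ) ≤ 2 ^ 320).trans (hM1.trans hmM)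
    exact_mod_cast this
  have hη3 : η ^ 3 ≤ η ^ 2 := pow_le_pow_of_le_one hη.le hη1 (by norm_num)
  have hη12 : η ^ 12 ≤ η ^ 3 := pow_le_pow_of_le_one hη.le hη1 (by norm_num)
  have hη2p : 0 < η ^ 2 := by positivity
  have hη3p : 0 < η ^ 3 := by positivity
  have hγ : (η ^ 6 / 2 ^ 29) ^ 2 = η ^ 12 / 2 ^ 58 := by ring
  have hMη : M * η ^ 62 = 2 ^ 320 := by rw [hM]; field_simp
  have e1 : (4 * m : ℝ) ^ 2 / Fintype.card V ≤ η ^ 2 / 16 / 4 := by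
    rw [div_le_iff₀ hn0]
    have : (4 * m : ℝ) ^ 2 ≤ (8 * M) ^ 2 := pow_le_pow_left₀ (by positivity) (by linarith) _
    refine this.trans ?_
    refine le_of_mul_le_mul_right ?_ (show 0 < η ^ 124 by positivity)
    have h1 := hbig 126 (by norm_num)
    have h2 : (8 * M) ^ 2 * η ^ 124 = 64 * (M * η ^ 62) ^ 2 := by ring
    rw [h2, hMη]
    have h3 : η ^ 2 / 16 / 4 * (Fintype.card V : ℝ) * η ^ 124 = (η ^ 126 * Fintype.card V) / 64 := by ring
    rw [h3]
    refine le_trans (by norm_num) (div_le_div_of_nonneg_right h1 (by norm_num))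
  have e2 : (4 * m : ℝ) ^ 4 * (η ^ 250 / 2 ^ 1300) ≤ η ^ 2 / 16 / 4 := by
    have : (4 * m : ℝ) ^ 4 ≤ (8 * M) ^ 4 := pow_le_pow_left₀ (by positivity) (by linarith) _
    refine (mul_le_mul_of_nonneg_right this (by positivity)).trans ?_
    have h2 : (8 * M) ^ 4 * (η ^ 250 / 2 ^ 1300) = (8 ^ 4 * (M * η ^ 62) ^ 4 / 2 ^ 1300) * η ^ 2 := by ring
    rw [h2, hMη]
    have h3 : η ^ 2 / 16 / 4 = (1 / 64) * η ^ 2 := by ring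
    rw [h3]
    apply mul_le_mul_of_nonneg_right _ hη2p.le
    norm_num
  have e3 := tail_small (η ^ 12 / 2 ^ 58) (η ^ 2 / 16) m (by positivity) (by positivity) hm8 (by
    have : (η ^ 12 / 2 ^ 58) ^ 5 * (η ^ 2 / 16) * M ≤ (η ^ 12 / 2 ^ 58) ^ 5 * (η ^ 2 / 16) * m := by gcongr
    refine le_trans ?_ this
    have h1 : (η ^ 12 / 2 ^ 58) ^ 5 * (η ^ 2 / 16) * M = (M * η ^ 62) * (1 / 2 ^ 294) := by ring
    rw [h1, hMη]
    norm_num)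
  obtain ⟨v, x0, x1, y0, h⟩ := sample_cut H m (η ^ 3 / 2 ^ 15) (η ^ 2 / 16) ((η ^ 6 / 2 ^ 29) ^ 2) (η ^ 250 / 2 ^ 1300)
    (by positivity) (by linarith) (by positivity) (by rw [hγ]; linarith) hm8 (by
      have h1 : η ^ 62 ≤ η ^ 3 := pow_le_pow_of_le_one hη.le hη1 (by norm_num)
      have h2 : η ^ 62 * M ≤ η ^ 3 * m := by gcongr
      rw [mul_comm, hMη] at h2
      have h3 : η ^ 3 / 2 ^ 15 * (m:ℝ) = (η ^ 3 * m) / 2 ^ 15 := by ring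
      rw [h3]
      refine le_trans (by norm_num) (div_le_div_of_nonneg_right h2 (by norm_num)))
    hmix hδ (by rw [hγ]; linarith)
  have hk : 1 ≤ (η ^ 6 / 2 ^ 29) ^ 2 * Fintype.card V := by
    rw [hγ]
    have h3 : η ^ 12 / 2 ^ 58 * (Fintype.card V : ℝ) = (η ^ 12 * Fintype.card V) / 2 ^ 58 := by ring
    rw [h3]
    refine le_trans (by norm_num) (div_le_div_of_nonneg_right (hbig 12 (by norm_num)) (by norm_num))
  have hk1 : η ^ 6 / 2 ^ 29 ≤ 1 := by
    have : η ^ 6 ≤ 1 := pow_le_one₀ hη.le hη1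
    linarith
  rcases h with h | h
  · obtain ⟨Y, y1, y2, y3⟩ := vgood_cross H η _ _ (η ^ 6 / 2 ^ 29) hη (by positivity) (by positivity) (by positivity) hk1 hk
      (le_of_eq (by ring)) (le_of_eq (by ring)) v x0 x1 y0 h
    exact ⟨Y, y1, y2, Or.inl y3⟩
  · obtain ⟨Y, y1, y2, y3⟩ := vgood_cross H.compl η _ _ (η ^ 6 / 2 ^ 29) hη (by positivity) (by positivity) (by positivity) hk1 hk
      (le_of_eq (by ring)) (le_of_eq (by ring)) v x0 x1 y0 h
    exact ⟨Y, y1, y2, Or.inr y3⟩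

end D2R
end RemovalCut5

section RemovalRec
open scoped Classical
set_option linter.unusedVariables false

namespace D2R

variable {V : Type}

lemma cnt_surj {α β : Type} [Fintype α] [Fintype β] {P : α → Prop} {Q : β → Prop} (e : β → α)
    (h : ∀ a, P a → ∃ b, Q b ∧ e b = a) : cnt P ≤ cnt Q := by
  unfold cnt
  refine (card_le_card (t := (univ.filter (fun b => Q b)).image e) ?_).trans card_image_le
  intro a ha
  simp only [mem_filter, mem_univ, true_and, mem_image] at ha ⊢
  exact h a ha

def emp (V : Type) : Hyp V where
  r a b c := False
  s12 _ _ _ h := h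
  s23 _ _ _ h := h
  ne12 _ _ _ h := h.elim

def glue (H1 H2 : Hyp V) (y : V → Prop) (F : Prop) : Hyp V where
  r a b c := (y a ∧ y b ∧ y c ∧ H1.r a b c) ∨ (¬ y a ∧ ¬ y b ∧ ¬ y c ∧ H2.r a b c) ∨
    (¬ (y a ∧ y b ∧ y c) ∧ ¬ (¬ y a ∧ ¬ y b ∧ ¬ y c) ∧ F ∧ a ≠ b ∧ a ≠ c ∧ b ≠ c)
  s12 a b c h := by
    have h1 := H1.s12 a b c
    have h2 := H2.s12 a b c
    grind
  s23 a b c h := by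
    have h1 := H1.s23 a b c
    have h2 := H2.s23 a b c
    grind
  ne12 a b c h := by
    have h1 := H1.ne12 a b c
    have h2 := H2.ne12 a b c
    grind

lemma glue_free (H1 H2 : Hyp V) (y : V → Prop) (F : Prop) (a b c d : V) 
    (h : (glue H1 H2 y F).Bad a b c d) : (y a ∧ y b ∧ y c ∧ y d ∧ H1.Bad a b c d) ∨ 
      (¬ y a ∧ ¬ y b ∧ ¬ y c ∧ ¬ y d ∧ H2.Bad a b c d) := by
  obtain ⟨h1, h2, h3, h4, h5⟩ := h
  have n1 := (glue H1 H2 y F).ne12 _ _ _ h1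
  have n2 := (glue H1 H2 y F).ne13 _ _ _ h1
  have n3 := (glue H1 H2 y F).ne23 _ _ _ h1
  have n4 := (glue H1 H2 y F).ne13 _ _ _ h2
  have n5 := (glue H1 H2 y F).ne23 _ _ _ h2
  simp only [glue] at h1 h2 h4 h5
  unfold Hyp.Bad
  by_cases y1 : y a <;> by_cases y2 : y b <;> by_cases y3 : y c <;> by_cases y4 : y d <;> simp_all

noncomputable def Hyp.dist [Fintype V] (H H' : Hyp V) (U : Finset V) : ℕ :=
  cnt (fun p : V × V × V => p.1 ∈ U ∧ p.2.1 ∈ U ∧ p.2.2 ∈ U ∧ ¬ (H.r p.1 p.2.1 p.2.2 ↔ H'.r p.1 p.2.1 p.2.2))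

lemma cnt_mem [Fintype V] (U : Finset V) : cnt (fun u => u ∈ U) = U.card := by
  unfold cnt; congr 1; ext; simp

lemma dist_le_cube [Fintype V] (H H' : Hyp V) (U : Finset V) : H.dist H' U ≤ U.card ^ 3 := by
  unfold Hyp.dist
  refine (cnt_mono (Q := fun p : V × V × V => p.1 ∈ U ∧ (p.2.1 ∈ U ∧ p.2.2 ∈ U)) (fun p hp => ⟨hp.1, hp.2.1, hp.2.2.1⟩)).trans ?_
  rw [cnt_prod (fun a => a ∈ U) (fun q : V × V => q.1 ∈ U ∧ q.2 ∈ U), cnt_prod (fun a => a ∈ U) (fun a => a ∈ U), cnt_mem]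
  apply le_of_eq; ring

lemma dist_emp [Fintype V] (H : Hyp V) (U : Finset V) : 
    H.dist (emp V) U ≤ (H.comap (Subtype.val : U → V)).ne := by
  refine cnt_surj (fun q => (q.1.1, q.2.1.1, q.2.2.1)) ?_
  rintro ⟨a, b, c⟩ ⟨h1, h2, h3, h4⟩
  refine ⟨(⟨a, h1⟩, ⟨b, h2⟩, ⟨c, h3⟩), ?_, rfl⟩
  simpa [emp, Hyp.comap] using h4

lemma dist_full [Fintype V] (H : Hyp V) (U : Finset V) : 
    H.dist (emp V).compl U ≤ (H.comap (Subtype.val : U → V)).compl.ne := by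
  refine cnt_surj (fun q => (q.1.1, q.2.1.1, q.2.2.1)) ?_
  rintro ⟨a, b, c⟩ ⟨h1, h2, h3, h4⟩
  refine ⟨(⟨a, h1⟩, ⟨b, h2⟩, ⟨c, h3⟩), ?_, rfl⟩
  have e1 := H.ne12 a b c
  have e2 := H.ne13 a b c
  have e3 := H.ne23 a b c
  simp only [emp, Hyp.comap, Hyp.compl] at h4 ⊢
  simp only [ne_eq, Subtype.mk.injEq]
  tauto

lemma dist_glue [Fintype V] (H H1 H2 : Hyp V) (U : Finset V) (y : V → Prop) (F : Prop) (K : Hyp V)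
    (hK : (F ∧ K = H.compl) ∨ (¬ F ∧ K = H)) :
    H.dist (glue H1 H2 y F) U ≤ H.dist H1 (U.filter y) + (H.dist H2 (U.filter (fun u => ¬ y u)) + 
      (K.comap (Subtype.val : U → V)).cross (fun u => y u.1)) := by
  have h1 : cnt (fun p : V × V × V => (p.1 ∈ U ∧ p.2.1 ∈ U ∧ p.2.2 ∈ U) ∧ K.r p.1 p.2.1 p.2.2 ∧ 
      ¬ (y p.1 ∧ y p.2.1 ∧ y p.2.2) ∧
    ¬ (¬ y p.1 ∧ ¬ y p.2.1 ∧ ¬ y p.2.2)) ≤ (K.comap (Subtype.val : U → V)).cross (fun u => y u.1) := by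
    refine cnt_surj (fun q => (q.1.1, q.2.1.1, q.2.2.1)) ?_
    rintro ⟨a, b, c⟩ ⟨⟨h1, h2, h3⟩, h4⟩
    exact ⟨(⟨a, h1⟩, ⟨b, h2⟩, ⟨c, h3⟩), h4, rfl⟩
  unfold Hyp.dist
  refine le_trans ?_ (Nat.add_le_add_left (Nat.add_le_add_left h1 _) _)
  refine (cnt_mono ?_).trans ((cnt_or _ _).trans (Nat.add_le_add_left (cnt_or _ _) _))
  rintro ⟨a, b, c⟩ ⟨h1, h2, h3, h4⟩
  have e1 := H.ne12 a b c
  have e2 := H.ne13 a b c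
  have e3 := H.ne23 a b c
  simp only [glue, mem_filter] at h4 ⊢
  rcases hK with ⟨hF, rfl⟩ | ⟨hF, rfl⟩ 
  · simp only [Hyp.compl]
    by_cases y1 : y a <;> by_cases y2 : y b <;> by_cases y3 : y c <;> simp_all <;> tauto
  · by_cases y1 : y a <;> by_cases y2 : y b <;> by_cases y3 : y c <;> simp_all

lemma nbad_comap [Fintype V] (H : Hyp V) (U : Finset V) : (H.comap (Subtype.val : U → V)).nbad ≤ H.nbad := by
  refine cnt_inj (fun ω i => (ω i).1) ?_ ?_
  · intro a b h
    funext i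
    exact Subtype.ext (congrFun h i)
  · rintro ω ⟨h1, h2, h3, h4⟩
    exact ⟨h1, h2, fun h => h3 (Subtype.ext h), h4⟩

set_option exponentiation.threshold 4000

lemma removal_rec [Fintype V] (H : Hyp V) (η : ℝ) (hη : 0 < η) (hη1 : η ≤ 1)
    (hn : 2 ^ 1300 ≤ η ^ 251 * Fintype.card V)
    (hδ : (H.nbad : ℝ) ≤ η ^ 254 / 2 ^ 1300 * (Fintype.card V : ℝ) ^ 4) :
    ∀ (k : ℕ) (U : Finset V), U.card ≤ k → ∃ H' : Hyp V, 
      (∀ a ∈ U, ∀ b ∈ U, ∀ c ∈ U, ∀ d ∈ U, ¬ H'.Bad a b c d) ∧ 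
      (H.dist H' U : ℝ) ≤ η * (U.card : ℝ) ^ 3 + (η * Fintype.card V) ^ 2 * U.card := by
  intro k
  induction k with
  | zero =>
    intro U hU
    refine ⟨emp V, fun a _ b _ c _ d _ h => h.1, ?_⟩
    have h1 : (H.dist (emp V) U : ℝ) ≤ (U.card : ℝ) ^ 3 := by exact_mod_cast dist_le_cube H (emp V) U
    have h2 : U.card = 0 := by omega
    simp [h2] at h1 ⊢
    linarith
  | succ k ih =>
    intro U hU
    by_cases hsm : (U.card : ℝ) ≤ η * Fintype.card V
    · refine ⟨emp V, fun a _ b _ c _ d _ h => h.1, ?_⟩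
      have h1 : (H.dist (emp V) U : ℝ) ≤ (U.card : ℝ) ^ 3 := by exact_mod_cast dist_le_cube H (emp V) U
      have h2 : (U.card : ℝ) ^ 2 * U.card ≤ (η * Fintype.card V) ^ 2 * U.card := by gcongr
      have h3 : 0 ≤ η * (U.card : ℝ) ^ 3 := by positivity
      nlinarith
    have hlg := (not_le.1 hsm).le
    have hn0 : (0:ℝ) ≤ Fintype.card V := by positivity
    have hU0 : 0 < U.card := by
      have : 0 ≤ η * (Fintype.card V : ℝ) := by positivity
      have : (0:ℝ) < U.card := by linarith
      exact_mod_cast this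
    have : Nonempty U := by
      obtain ⟨u, hu⟩ := card_pos.1 hU0
      exact ⟨⟨u, hu⟩⟩
    have hcU : Fintype.card U = U.card := Fintype.card_coe U
    have e0 : 0 ≤ (η * Fintype.card V) ^ 2 * (U.card:ℝ) := by positivity
    rcases cut_lemma (H.comap (Subtype.val : U → V)) η hη hη1 (by
      rw [hcU]
      calc (2:ℝ) ^ 1300 ≤ η ^ 251 * Fintype.card V := hn
        _ = η ^ 250 * (η * Fintype.card V) := by ring
        _ ≤ _ := by gcongr) (by
      rw [hcU]
      calc ((H.comap (Subtype.val : U → V)).nbad : ℝ) ≤ H.nbad := by exact_mod_cast nbad_comap H U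
        _ ≤ η ^ 254 / 2 ^ 1300 * (Fintype.card V : ℝ) ^ 4 := hδ
        _ = η ^ 250 / 2 ^ 1300 * (η * (Fintype.card V : ℝ)) ^ 4 := by ring
        _ ≤ _ := by gcongr) with h | h | ⟨Y, ⟨u1, hu1⟩, ⟨u2, hu2⟩, h⟩
    · refine ⟨emp V, fun a _ b _ c _ d _ h => h.1, ?_⟩
      have h1 : (H.dist (emp V) U : ℝ) ≤ (H.comap (Subtype.val : U → V)).ne := by exact_mod_cast dist_emp H U
      rw [hcU] at h
      linarith
    · refine ⟨(emp V).compl, fun a _ b _ c _ d _ h => (Hyp.bad_compl _ _ _ _ _ h).1, ?_⟩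
      have h1 : (H.dist (emp V).compl U : ℝ) ≤ (H.comap (Subtype.val : U → V)).compl.ne := by exact_mod_cast dist_full H U
      rw [hcU] at h
      linarith
    · obtain ⟨y, hyY⟩ : ∃ y : V → Prop, (fun u : U => y u.1) = Y := 
        ⟨fun v => ∃ h : v ∈ U, Y ⟨v, h⟩, by funext u; simp⟩
      subst hyY
      have c0 : (U.filter y).card + (U.filter (fun u => ¬ y u)).card = U.card := card_filter_add_card_filter_not _
      have c1 : 0 < (U.filter y).card := card_pos.2 ⟨u1.1, by simpa using hu1⟩
      have c2 : 0 < (U.filter (fun u => ¬ y u)).card := card_pos.2 ⟨u2.1, by simpa using hu2⟩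
      have d1 : cnt (fun u : U => y u.1) ≤ (U.filter y).card := by
        rw [← cnt_mem]
        refine cnt_inj Subtype.val Subtype.val_injective ?_
        intro a ha
        simpa using ha
      have d2 : cnt (fun u : U => ¬ y u.1) ≤ (U.filter (fun u => ¬ y u)).card := by
        rw [← cnt_mem]
        refine cnt_inj Subtype.val Subtype.val_injective ?_
        intro a ha
        simpa using ha
      obtain ⟨H1, f1, g1⟩ := ih (U.filter y) (by omega)
      obtain ⟨H2, f2, g2⟩ := ih (U.filter (fun u => ¬ y u)) (by omega)
      have free : ∀ F, ∀ a ∈ U, ∀ b ∈ U, ∀ c ∈ U, ∀ d ∈ U, ¬ (glue H1 H2 y F).Bad a b c d := by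
        intro F a ha b hb c hc d hd hbad
        rcases glue_free _ _ _ _ _ _ _ _ hbad with ⟨a1, a2, a3, a4, a5⟩ | ⟨a1, a2, a3, a4, a5⟩
        · exact f1 a (mem_filter.2 ⟨ha, a1⟩) b (mem_filter.2 ⟨hb, a2⟩) c (mem_filter.2 ⟨hc, a3⟩) d (mem_filter.2 ⟨hd, a4⟩) a5
        · exact f2 a (mem_filter.2 ⟨ha, a1⟩) b (mem_filter.2 ⟨hb, a2⟩) c (mem_filter.2 ⟨hc, a3⟩) d (mem_filter.2 ⟨hd, a4⟩) a5
      have fin : ∀ F, ∀ x : ℕ, (x : ℝ) ≤ 3 * η * cnt (fun u : U => y u.1) * cnt (fun u : U => ¬ y u.1) * Fintype.card U → 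
          H.dist (glue H1 H2 y F) U ≤ H.dist H1 (U.filter y) + (H.dist H2 (U.filter (fun u => ¬ y u)) + x) → 
          (H.dist (glue H1 H2 y F) U : ℝ) ≤ η * (U.card : ℝ) ^ 3 + (η * Fintype.card V) ^ 2 * U.card := by
        intro F x hx hd
        have hd' := (Nat.cast_le (α := ℝ)).2 hd
        push_cast at hd'
        rw [hcU] at hx
        have hx2 : 3 * η * (cnt (fun u : U => y u.1) : ℝ) * (cnt (fun u : U => ¬ y u.1) : ℝ) * U.card ≤ 
          3 * η * ((U.filter y).card : ℝ) * ((U.filter (fun u => ¬ y u)).card : ℝ) * U.card := by gcongr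
        have c0' : (U.card : ℝ) = ((U.filter y).card : ℝ) + ((U.filter (fun u => ¬ y u)).card : ℝ) := by exact_mod_cast c0.symm
        rw [c0'] at hx2 hx ⊢
        generalize ((U.filter y).card : ℝ) = p at *
        generalize ((U.filter (fun u => ¬ y u)).card : ℝ) = q at *
        have : η * (p + q) ^ 3 = η * p ^ 3 + η * q ^ 3 + 3 * η * p * q * (p + q) := by ring
        rw [this]
        linarith
      rcases h with h | h
      · refine ⟨glue H1 H2 y False, free _, fin _ _ h ?_⟩
        exact dist_glue H H1 H2 U y False H (Or.inr ⟨by simp, rfl⟩)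
      · refine ⟨glue H1 H2 y True, free _, fin _ _ h ?_⟩
        rw [← H.comap_compl _ Subtype.val_injective]
        exact dist_glue H H1 H2 U y True H.compl (Or.inl ⟨by simp, rfl⟩)

end D2R
end RemovalRec

section RemovalFinal
set_option linter.unusedVariables false

namespace D2R

variable {V : Type}

def toHyp [DecidableEq V] (E : Finset (Finset V)) : Hyp V where
  r a b c := a ≠ b ∧ a ≠ c ∧ b ≠ c ∧ ({a, b, c} : Finset V) ∈ E
  s12 a b c h := by
    refine ⟨h.1.symm, h.2.2.1, h.2.1, ?_⟩
    have : ({b, a, c} : Finset V) = {a, b, c} := by ext; simp; tauto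
    rw [this]; exact h.2.2.2
  s23 a b c h := by
    refine ⟨h.2.1, h.1, h.2.2.1.symm, ?_⟩
    have : ({a, c, b} : Finset V) = {a, b, c} := by ext; simp; tauto
    rw [this]; exact h.2.2.2
  ne12 a b c h := h.1

lemma filt_eq [DecidableEq V] (E : Finset (Finset V)) (hE : ∀ e ∈ E, e.card = 3) (a b c d : V)
    (hab : a ≠ b) (hac : a ≠ c) (had : a ≠ d) (hbc : b ≠ c) (hbd : b ≠ d) (hcd : c ≠ d) :
    (E.filter (fun e => e ⊆ ({a, b, c, d} : Finset V))).card = 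
      (if ({a, b, c} : Finset V) ∈ E then 1 else 0) + ((if ({a, b, d} : Finset V) ∈ E then 1 else 0) + 
      ((if ({a, c, d} : Finset V) ∈ E then 1 else 0) + (if ({b, c, d} : Finset V) ∈ E then 1 else 0))) := by
  have h : E.filter (fun e => e ⊆ ({a, b, c, d} : Finset V)) = 
      ({{a, b, c}, {a, b, d}, {a, c, d}, {b, c, d}} : Finset (Finset V)).filter (fun e => e ∈ E) := by
    ext e
    simp only [mem_filter, mem_insert, mem_singleton]
    constructor
    · rintro ⟨h1, h2⟩
      refine ⟨?_, h1⟩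
      have h4 : ({a, b, c, d} : Finset V).card = 4 := by
        simp [*]
      have h5 := card_sdiff_add_card_eq_card h2
      rw [h4, hE e h1] at h5
      obtain ⟨x, hx⟩ := card_eq_one.1 (show (({a, b, c, d} : Finset V) \ e).card = 1 by omega)
      have h6 : e = ({a, b, c, d} : Finset V) \ {x} := by
        rw [← hx, Finset.sdiff_sdiff_eq_self h2]
      have h7 : x ∈ ({a, b, c, d} : Finset V) := by
        have : x ∈ ({a, b, c, d} : Finset V) \ e := by rw [hx]; simp
        exact (mem_sdiff.1 this).1
      simp only [mem_insert, mem_singleton] at h7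
      rw [h6]
      rcases h7 with rfl | rfl | rfl | rfl
      · right; right; right; ext z; simp; grind
      · right; right; left; ext z; simp; grind
      · right; left; ext z; simp; grind
      · left; ext z; simp; grind
    · rintro ⟨h1, h2⟩
      refine ⟨h2, ?_⟩
      rcases h1 with rfl | rfl | rfl | rfl <;> (intro z; simp; tauto)
  rw [h, card_filter, sum_insert, sum_insert, sum_insert, sum_singleton]
  · simp only [mem_singleton]
    intro h
    have : b ∈ ({a, c, d} : Finset V) := by rw [h]; simp
    simp at this; tauto
  · simp only [mem_insert, mem_singleton]
    intro h
    have : c ∈ ({a, b, d} : Finset V) := by rcases h with h | h <;> rw [h] <;> simp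
    simp at this; tauto
  · simp only [mem_insert, mem_singleton]
    intro h
    have : d ∈ ({a, b, c} : Finset V) := by rcases h with h | h | h <;> rw [h] <;> simp
    simp at this; tauto

lemma free_of [Fintype V] [DecidableEq V] (E : Finset (Finset V)) (hE : ∀ e ∈ E, e.card = 3) 
    (h : ∀ a b c d, ¬ (toHyp E).Bad a b c d) : InducedD2Free E := by
  intro S hS hcard
  obtain ⟨a, b, c, d, hab, hac, had, hbc, hbd, hcd, rfl⟩ := card_eq_four.1 hS
  rw [filt_eq E hE a b c d hab hac had hbc hbd hcd] at hcard
  have q : ∀ x y z : V, x ≠ y → x ≠ z → y ≠ z → ((toHyp E).r x y z ↔ ({x, y, z} : Finset V) ∈ E) := by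
    intro x y z h1 h2 h3
    exact ⟨fun h => h.2.2.2, fun h => ⟨h1, h2, h3, h⟩⟩
  obtain ⟨K, hKE⟩ : ∃ K, K = toHyp E := ⟨_, rfl⟩
  rw [← hKE] at h q
  have b1 := h a b c d
  have b2 := h a c b d
  have b3 := h a d b c
  have b4 := h b c a d
  have b5 := h b d a c
  have b6 := h c d a b
  clear h
  have s12 := K.s12
  have s23 := K.s23
  unfold Hyp.Bad at *
  have i1 : ∀ x y z, K.r x y z ↔ K.r y x z := fun x y z => ⟨s12 _ _ _, s12 _ _ _⟩
  have i2 : ∀ x y z, K.r x y z ↔ K.r x z y := fun x y z => ⟨s23 _ _ _, s23 _ _ _⟩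
  have e1 : K.r a c b ↔ K.r a b c := i2 _ _ _
  have e2 : K.r a d b ↔ K.r a b d := i2 _ _ _
  have e3 : K.r a d c ↔ K.r a c d := i2 _ _ _
  have e4 : K.r b c a ↔ K.r a b c := (i2 _ _ _).trans (i1 _ _ _)
  have e5 : K.r b d a ↔ K.r a b d := (i2 _ _ _).trans (i1 _ _ _)
  have e6 : K.r c d a ↔ K.r a c d := (i2 _ _ _).trans (i1 _ _ _)
  have e7 : K.r c d b ↔ K.r b c d := (i2 _ _ _).trans (i1 _ _ _)
  have e8 : K.r b d c ↔ K.r b c d := i2 _ _ _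
  have e9 : K.r c b d ↔ K.r b c d := i1 _ _ _
  have e10 : K.r d b c ↔ K.r b c d := (i1 _ _ _).trans (i2 _ _ _)
  have e11 : K.r b a d ↔ K.r a b d := i1 _ _ _
  have e12 : K.r c a d ↔ K.r a c d := i1 _ _ _
  have e13 : K.r b a c ↔ K.r a b c := i1 _ _ _
  have e14 : K.r d a c ↔ K.r a c d := (i1 _ _ _).trans (i2 _ _ _)
  have e15 : K.r c a b ↔ K.r a b c := (i1 _ _ _).trans (i2 _ _ _)
  have e16 : K.r d a b ↔ K.r a b d := (i1 _ _ _).trans (i2 _ _ _)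
  simp only [e1, e2, e3, e4, e5, e6, e7, e8, e9, e10, e11, e12, e13, e14, e15, e16, q a b c hab hac hbc, q a b d hab had hbd, q a c d hac had hcd, q b c d hbc hbd hcd] at b1 b2 b3 b4 b5 b6
  clear e1 e2 e3 e4 e5 e6 e7 e8 e9 e10 e11 e12 e13 e14 e15 e16 i1 i2 s12 s23 q hE hS
  by_cases p1 : ({a, b, c} : Finset V) ∈ E <;> by_cases p2 : ({a, b, d} : Finset V) ∈ E <;> by_cases p3 : ({a, c, d} : Finset V) ∈ E <;> by_cases p4 : ({b, c, d} : Finset V) ∈ E <;> 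
    simp [p1, p2, p3, p4] at hcard b1 b2 b3 b4 b5 b6 <;> tauto

lemma nbad_le [Fintype V] [DecidableEq V] (E : Finset (Finset V)) (hE : ∀ e ∈ E, e.card = 3) :
    (toHyp E).nbad ≤ 256 * inducedD2Count E := by
  classical
  unfold Hyp.nbad inducedD2Count cnt
  apply card_le_mul_card_image_of_maps_to (f := fun ω : Fin 4 → V => ({ω 0, ω 1, ω 2, ω 3} : Finset V))
  · intro ω hω
    simp only [mem_filter, mem_univ, true_and, mem_powersetCard, subset_univ] at hω ⊢
    obtain ⟨h1, h2, h3, h4, h5⟩ := hω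
    have n1 := (toHyp E).ne12 _ _ _ h1
    have n2 := (toHyp E).ne13 _ _ _ h1
    have n3 := (toHyp E).ne23 _ _ _ h1
    have n4 := (toHyp E).ne13 _ _ _ h2
    have n5 := (toHyp E).ne23 _ _ _ h2
    simp only [toHyp] at h1 h2 h4 h5
    refine ⟨by simp [*], ?_⟩
    rw [filt_eq E hE _ _ _ _ n1 n2 n4 n3 n5 h3]
    simp_all
  · intro S hS
    simp only [mem_filter, mem_powersetCard] at hS
    refine (card_le_card (t := Fintype.piFinset (fun _ : Fin 4 => S)) ?_).trans ?_
    · intro ω hω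
      simp only [mem_filter, Fintype.mem_piFinset] at hω ⊢
      intro i
      rw [← hω.2]
      fin_cases i <;> simp
    · simp [hS.1.2]

lemma r_perm (K : Hyp V) [DecidableEq V] (a b c a' b' c' : V) (hab : a ≠ b) (hac : a ≠ c) (hbc : b ≠ c)
    (h : ({a, b, c} : Finset V) = {a', b', c'}) (hr : K.r a' b' c') : K.r a b c := by
  have h1 : a ∈ ({a', b', c'} : Finset V) := by rw [← h]; simp
  have h2 : b ∈ ({a', b', c'} : Finset V) := by rw [← h]; simp
  have h3 : c ∈ ({a', b', c'} : Finset V) := by rw [← h]; simp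
  clear h
  simp only [mem_insert, mem_singleton] at h1 h2 h3
  have s12 := K.s12
  have s23 := K.s23
  rcases h1 with rfl | rfl | rfl <;> rcases h2 with rfl | rfl | rfl <;> rcases h3 with rfl | rfl | rfl <;> grind

lemma exists_E' [Fintype V] [DecidableEq V] (E : Finset (Finset V)) (hE : ∀ e ∈ E, e.card = 3) (K : Hyp V)
    (hK : ∀ a b c d, ¬ K.Bad a b c d) : 
    ∃ E' : Finset (Finset V), (∀ e ∈ E', e.card = 3) ∧ InducedD2Free E' ∧
      ((E \ E') ∪ (E' \ E)).card ≤ (toHyp E).dist K univ := by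
  classical
  let E' : Finset (Finset V) := (univ.powersetCard 3).filter (fun e => ∃ a b c, e = {a, b, c} ∧ K.r a b c)
  have hE' : ∀ e ∈ E', e.card = 3 := by
    intro e he
    simp only [E', mem_filter, mem_powersetCard] at he
    exact he.1.2
  have hmem : ∀ a b c, a ≠ b → a ≠ c → b ≠ c → (({a, b, c} : Finset V) ∈ E' ↔ K.r a b c) := by
    intro a b c h1 h2 h3
    simp only [E', mem_filter, mem_powersetCard, subset_univ, true_and]
    constructor
    · rintro ⟨_, a', b', c', h, hr⟩
      exact r_perm K _ _ _ _ _ _ h1 h2 h3 h hr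
    · intro hr
      exact ⟨card_eq_three.2 ⟨a, b, c, h1, h2, h3, rfl⟩, a, b, c, rfl, hr⟩
  have hK' : toHyp E' = K := by
    ext a b c
    constructor
    · rintro ⟨h1, h2, h3, h4⟩
      exact (hmem a b c h1 h2 h3).1 h4
    · intro h
      have h1 := K.ne12 _ _ _ h
      have h2 := K.ne13 _ _ _ h
      have h3 := K.ne23 _ _ _ h
      exact ⟨h1, h2, h3, (hmem a b c h1 h2 h3).2 h⟩
  refine ⟨E', hE', free_of E' hE' (by rw [hK']; exact hK), ?_⟩
  unfold Hyp.dist cnt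
  refine (card_le_card ?_).trans (card_image_le (f := fun p : V × V × V => ({p.1, p.2.1, p.2.2} : Finset V)))
  intro e he
  have hc3 : e.card = 3 := by
    simp only [mem_union, mem_sdiff] at he
    rcases he with he | he
    · exact hE e he.1
    · exact hE' e he.1
  obtain ⟨a, b, c, h1, h2, h3, rfl⟩ := card_eq_three.1 hc3
  rw [mem_image]
  refine ⟨(a, b, c), ?_, rfl⟩
  simp only [mem_filter, mem_univ, true_and]
  simp only [mem_union, mem_sdiff, hmem a b c h1 h2 h3] at he
  simp only [toHyp]
  tauto

end D2R
end RemovalFinal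

set_option exponentiation.threshold 4000 in
/-- Polynomial induced removal lemma for `D₂`. -/
theorem induced_D2_removal :
    ∃ C : ℝ, C > 0 ∧ ∀ ε : ℝ, 0 < ε →
      ∀ (V : Type) [Fintype V] [DecidableEq V] (E : Finset (Finset V)),
        (∀ e ∈ E, e.card = 3) →
        (Fintype.card V : ℝ) ≥ C * ε ^ (-C) →
        (inducedD2Count E : ℝ) < (ε ^ C / C) * (Fintype.card V : ℝ) ^ 4 →
        ∃ E' : Finset (Finset V), (∀ e ∈ E', e.card = 3) ∧ InducedD2Free E' ∧
          (((E \ E') ∪ (E' \ E)).card : ℝ) ≤ ε * (Fintype.card V : ℝ) ^ 3 := by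
  obtain ⟨C, hC⟩ : ∃ C : ℝ, C = 2 ^ 1562 := ⟨_, rfl⟩
  have hC1 : (254:ℝ) ≤ C := by rw [hC]; norm_num
  refine ⟨C, by linarith, ?_⟩
  intro ε hε V _ _ E hE hn hcount
  have hcube : ∀ K : D2R.Hyp V, ((D2R.toHyp E).dist K univ : ℝ) ≤ (Fintype.card V : ℝ) ^ 3 := by
    intro K
    exact_mod_cast D2R.dist_le_cube (D2R.toHyp E) K univ
  rcases le_or_gt 1 ε with h1 | h1
  · obtain ⟨E', a1, a2, a3⟩ := D2R.exists_E' E hE (D2R.emp V) (fun a b c d h => h.1)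
    refine ⟨E', a1, a2, ?_⟩
    have a3' : (((E \ E') ∪ (E' \ E)).card : ℝ) ≤ (D2R.toHyp E).dist (D2R.emp V) univ := by exact_mod_cast a3
    refine a3'.trans ((hcube _).trans ?_)
    have : (0:ℝ) ≤ (Fintype.card V : ℝ) ^ 3 := by positivity
    nlinarith
  have hn0 : (0:ℝ) ≤ Fintype.card V := by positivity
  have hpow : ε ^ C ≤ ε ^ 254 := by
    rw [← Real.rpow_natCast]
    exact Real.rpow_le_rpow_of_exponent_ge hε h1.le (by push_cast; linarith)
  have hpow2 : (ε ^ 251)⁻¹ ≤ ε ^ (-C) := by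
    rw [← Real.rpow_natCast, ← Real.rpow_neg hε.le]
    exact Real.rpow_le_rpow_of_exponent_ge hε h1.le (by push_cast; linarith)
  have hN : (2:ℝ) ^ 1300 ≤ (ε / 2) ^ 251 * Fintype.card V := by
    have : (2:ℝ) ^ 1562 * (ε ^ 251)⁻¹ ≤ Fintype.card V := by
      rw [← hC]
      exact le_trans (mul_le_mul_of_nonneg_left hpow2 (by linarith)) hn
    calc (2:ℝ) ^ 1300 ≤ 2 ^ 1562 / 2 ^ 251 := by norm_num
      _ = (ε / 2) ^ 251 * ((2:ℝ) ^ 1562 * (ε ^ 251)⁻¹) := by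
        rw [div_pow]; field_simp
      _ ≤ _ := by gcongr
  have hB : ((D2R.toHyp E).nbad : ℝ) ≤ (ε / 2) ^ 254 / 2 ^ 1300 * (Fintype.card V : ℝ) ^ 4 := by
    have h2 : ((D2R.toHyp E).nbad : ℝ) ≤ 256 * inducedD2Count E := by exact_mod_cast D2R.nbad_le E hE
    calc ((D2R.toHyp E).nbad : ℝ) ≤ 256 * inducedD2Count E := h2
      _ ≤ 256 * ((ε ^ C / C) * (Fintype.card V : ℝ) ^ 4) := by gcongr
      _ ≤ 256 * ((ε ^ 254 / C) * (Fintype.card V : ℝ) ^ 4) := by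
        have : 0 < C := by linarith
        gcongr
      _ = (256 / C) * (ε ^ 254 * (Fintype.card V : ℝ) ^ 4) := by ring
      _ = (256 / 2 ^ 1562) * (ε ^ 254 * (Fintype.card V : ℝ) ^ 4) := by rw [hC]
      _ ≤ (1 / 2 ^ 254 / 2 ^ 1300) * (ε ^ 254 * (Fintype.card V : ℝ) ^ 4) := by
        have h9 : 0 ≤ ε ^ 254 * (Fintype.card V : ℝ) ^ 4 := mul_nonneg (pow_nonneg hε.le _) (pow_nonneg hn0 _)
        exact mul_le_mul_of_nonneg_right (by norm_num) h9
      _ = _ := by rw [div_pow]; ring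
  obtain ⟨K, k1, k2⟩ := D2R.removal_rec (D2R.toHyp E) (ε / 2) (by positivity) (by linarith) hN hB
    (Fintype.card V) univ (le_of_eq card_univ)
  obtain ⟨E', a1, a2, a3⟩ := D2R.exists_E' E hE K (fun a b c d => k1 a (mem_univ _) b (mem_univ _) c (mem_univ _) d (mem_univ _))
  refine ⟨E', a1, a2, ?_⟩
  have a3' : (((E \ E') ∪ (E' \ E)).card : ℝ) ≤ (D2R.toHyp E).dist K univ := by exact_mod_cast a3
  refine a3'.trans (k2.trans ?_)
  rw [card_univ]
  have : (0:ℝ) ≤ (Fintype.card V : ℝ) ^ 3 := by positivity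
  have h5 : (ε / 2) * (Fintype.card V : ℝ) ^ 3 + ((ε / 2) * Fintype.card V) ^ 2 * Fintype.card V = 
    (ε / 2 + (ε / 2) ^ 2) * (Fintype.card V : ℝ) ^ 3 := by ring
  rw [h5]
  apply mul_le_mul_of_nonneg_right _ this
  nlinarith
end

section
/- Let H be a 3-uniform hypergraph with n vertices and density 0 ≤ d < 1. Then H contains a clique of size at least min{ n/2, sqrt(3/(4(1−d))) }. -/
open Finset

lemma aux_ineq (T m : ℝ) (hT : 1 ≤ T) (h1 : 2 * T - 1 ≤ m) (h2 : m ≤ 2 * T) :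
    m * (m - 1) * (m - 2) ≤ 8 * T ^ 2 * (m - T) := by
  obtain ⟨θ, rfl⟩ : ∃ θ, m = 2 * T - θ := ⟨2 * T - m, by ring⟩
  have t0 : 0 ≤ θ := by linarith
  have t1 : 0 ≤ 1 - θ := by linarith
  have a : 0 ≤ (1 - θ) * (12 * T ^ 2 - 4 * T) := mul_nonneg t1 (by nlinarith)
  have b : 0 ≤ θ * ((8 * T - 3) * (T - 1) * 2) :=
    mul_nonneg t0 (by
      have := mul_nonneg (show 0 ≤ 8 * T - 3 by linarith) (show 0 ≤ T - 1 by linarith)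
      linarith)
  have c : 0 ≤ (1 - θ) * θ * (6 * T - 4 - θ) :=
    mul_nonneg (mul_nonneg t1 t0) (by linarith)
  nlinarith [a, b, c]

lemma choose3 (m : ℕ) : ((m.choose 3 : ℕ) : ℝ) = (m : ℝ) * (m - 1) * (m - 2) / 6 := by
  induction m with
  | zero => simp
  | succ k ih =>
    rw [Nat.choose_succ_succ' k 2, Nat.cast_add, ih, Nat.cast_choose_two]
    push_cast
    ring

lemma count_sup {V : Type} [Fintype V] [DecidableEq V] (e : Finset V) (he : e.card = 3)
    (m : ℕ) (hm : 3 ≤ m) :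
    ((powersetCard m (univ : Finset V)).filter (fun S => e ⊆ S)).card
      = (Fintype.card V - 3).choose (m - 3) := by
  have : (univ \ e).card = Fintype.card V - 3 := by
    rw [card_sdiff_of_subset (subset_univ e), he, card_univ]
  rw [← this, ← card_powersetCard]
  refine card_bij' (fun S _ => S \ e) (fun S _ => S ∪ e) ?_ ?_ ?_ ?_
  · intro S hS
    simp only [mem_filter, mem_powersetCard] at hS ⊢
    refine ⟨sdiff_subset_sdiff (subset_univ _) le_rfl, ?_⟩
    rw [card_sdiff_of_subset hS.2, he, hS.1.2]
  · intro S hS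
    simp only [mem_filter, mem_powersetCard] at hS ⊢
    have hd : Disjoint S e := disjoint_of_subset_left hS.1 sdiff_disjoint
    refine ⟨⟨subset_univ _, ?_⟩, subset_union_right⟩
    rw [card_union_of_disjoint hd, he, hS.2]; omega
  · intro S hS
    simp only [mem_filter] at hS
    exact sdiff_union_of_subset hS.2
  · intro S hS
    simp only [mem_powersetCard] at hS
    have hd : Disjoint S e := disjoint_of_subset_left hS.1 sdiff_disjoint
    exact union_sdiff_cancel_right hd

lemma averaging {V : Type} [Fintype V] [DecidableEq V] (N : Finset (Finset V))
    (hN : ∀ e ∈ N, e.card = 3) (m : ℕ) (hm : 3 ≤ m) (hmn : m ≤ Fintype.card V) :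
    ∃ S : Finset V, S.card = m ∧
      (N.filter (fun e => e ⊆ S)).card * (Fintype.card V).choose 3 ≤ N.card * m.choose 3 := by
  by_contra hcon
  push Not at hcon
  have hsum : ∑ S ∈ powersetCard m (univ : Finset V), (N.filter (fun e => e ⊆ S)).card
      = N.card * (Fintype.card V - 3).choose (m - 3) := by
    simp_rw [card_filter]
    rw [sum_comm]
    simp_rw [← card_filter]
    rw [sum_congr rfl (fun e he => count_sup e (hN e he) m hm), sum_const, smul_eq_mul]
  have hlt : ∑ S ∈ powersetCard m (univ : Finset V), N.card * m.choose 3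
      < ∑ S ∈ powersetCard m (univ : Finset V),
        (N.filter (fun e => e ⊆ S)).card * (Fintype.card V).choose 3 := by
    apply sum_lt_sum_of_nonempty
    · exact powersetCard_nonempty.2 (by simpa using hmn)
    · intro S hS
      exact hcon S (mem_powersetCard.1 hS).2
  rw [sum_const, ← sum_mul, hsum, card_powersetCard, card_univ, smul_eq_mul] at hlt
  have := congrArg (N.card * ·) (Nat.choose_mul (n := Fintype.card V) hm)
  nlinarith

/-- Every 3-uniform hypergraph on `n` vertices with density `0 ≤ d < 1` contains a clique
of size at least `min(n/2, √(3/(4(1-d))))`. -/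
theorem probabilistic_clique {V : Type} [Fintype V] [DecidableEq V]
    (E : Finset (Finset V)) (hE : ∀ e ∈ E, e.card = 3)
    (d : ℝ) (hd0 : 0 ≤ d) (hd1 : d < 1)
    (hdens : d = (E.card : ℝ) / ((Fintype.card V).choose 3 : ℝ)) :
    ∃ S : Finset V, (∀ t ⊆ S, t.card = 3 → t ∈ E) ∧
      (S.card : ℝ) ≥ min ((Fintype.card V : ℝ) / 2) (Real.sqrt (3 / (4 * (1 - d)))) := by
  set T := min ((Fintype.card V : ℝ) / 2) (Real.sqrt (3 / (4 * (1 - d)))) with hTdef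
  have hTn : T ≤ (Fintype.card V : ℝ) / 2 := min_le_left _ _
  have hTs : T ≤ Real.sqrt (3 / (4 * (1 - d))) := min_le_right _ _
  rcases lt_or_ge T 1 with hT | hT
  · rcases isEmpty_or_nonempty V with hV | ⟨⟨v⟩⟩
    · refine ⟨∅, ?_, ?_⟩
      · intro t ht h3
        rw [subset_empty.1 ht] at h3
        simp at h3
      · simpa using hTn
    · refine ⟨{v}, ?_, ?_⟩
      · intro t ht h3
        have := card_le_card ht
        rw [card_singleton] at this
        omega
      · simpa using hT.le
  have hq : 0 < 1 - d := by linarith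
  have hqT : (1 - d) * (4 * T ^ 2) ≤ 3 := by
    have h := (Real.le_sqrt (by linarith) (by positivity)).1 hTs
    rw [le_div_iff₀ (by positivity)] at h
    linarith
  set m := ⌊2 * T⌋₊ with hm
  have hm2 : (m : ℝ) ≤ 2 * T := Nat.floor_le (by linarith)
  have hm1 : 2 * T - 1 ≤ m := by
    have := Nat.lt_floor_add_one (2 * T)
    linarith
  have hmn : m ≤ Fintype.card V := by
    have : (m : ℝ) ≤ Fintype.card V := by linarith
    exact_mod_cast this
  set N := powersetCard 3 (univ : Finset V) \ E with hNdef
  have hN : ∀ e ∈ N, e.card = 3 := fun e he =>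
    (mem_powersetCard.1 (mem_sdiff.1 he).1).2
  obtain ⟨S, hS, hbad⟩ : ∃ S : Finset V, S.card = m ∧
      ((N.filter (fun e => e ⊆ S)).card : ℝ) ≤ (1 - d) * (m.choose 3 : ℕ) := by
    rcases lt_or_ge m 3 with h3 | h3
    · obtain ⟨S, -, hS⟩ := exists_subset_card_eq (s := (univ : Finset V)) (n := m) (by simpa using hmn)
      refine ⟨S, hS, ?_⟩
      have : N.filter (fun e => e ⊆ S) = ∅ := by
        apply filter_eq_empty_iff.2
        intro e he hs
        have := card_le_card hs
        rw [hN e he] at this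
        omega
      rw [this]
      simp only [card_empty, Nat.cast_zero]
      positivity
    · obtain ⟨S, hS, h⟩ := averaging N hN m h3 hmn
      refine ⟨S, hS, ?_⟩
      have hpos : (0 : ℝ) < ((Fintype.card V).choose 3 : ℕ) := by
        exact_mod_cast Nat.choose_pos (h3.trans hmn)
      have hsub : E ⊆ powersetCard 3 (univ : Finset V) := fun e he =>
        mem_powersetCard.2 ⟨subset_univ _, hE e he⟩
      have hNc : (N.card : ℝ) = (1 - d) * ((Fintype.card V).choose 3 : ℕ) := by
        have h1 : N.card + E.card = (Fintype.card V).choose 3 := by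
          rw [hNdef, card_sdiff_add_card_eq_card hsub, card_powersetCard, card_univ]
        have h2 : (N.card : ℝ) + E.card = ((Fintype.card V).choose 3 : ℕ) := by exact_mod_cast h1
        rw [hdens, sub_mul, div_mul_cancel₀ _ hpos.ne']
        linarith
      have h' : ((N.filter (fun e => e ⊆ S)).card : ℝ) * ((Fintype.card V).choose 3 : ℕ)
          ≤ N.card * (m.choose 3 : ℕ) := by exact_mod_cast h
      rw [hNc] at h'
      refine le_of_mul_le_mul_right ?_ hpos
      linarith
  have hex : ∀ e : Finset V, ∃ v : Option V, e ∈ N → ∃ w ∈ e, v = some w := by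
    intro e
    by_cases he : e ∈ N
    · obtain ⟨w, hw⟩ := card_pos.1 (by rw [hN e he]; norm_num)
      exact ⟨some w, fun _ => ⟨w, hw, rfl⟩⟩
    · exact ⟨none, fun h => absurd h he⟩
  choose f hf using hex
  set B := (N.filter (fun e => e ⊆ S)).biUnion (fun e => (f e).toFinset) with hB
  have hBc : B.card ≤ (N.filter (fun e => e ⊆ S)).card := by
    have := card_biUnion_le_card_mul (N.filter (fun e => e ⊆ S)) (fun e => (f e).toFinset) 1
      (by intro e _; cases f e <;> simp)
    simpa using this
  refine ⟨S \ B, ?_, ?_⟩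
  · intro t ht h3
    by_contra hE'
    have htN : t ∈ N := mem_sdiff.2 ⟨mem_powersetCard.2 ⟨subset_univ _, h3⟩, hE'⟩
    obtain ⟨w, hw, hfw⟩ := hf t htN
    have h1 := mem_sdiff.1 (ht hw)
    apply h1.2
    rw [hB, mem_biUnion]
    exact ⟨t, mem_filter.2 ⟨htN, ht.trans sdiff_subset⟩, by simp [hfw]⟩
  · have h1 : S.card ≤ (S \ B).card + B.card := by
      have := le_card_sdiff B S
      omega
    have h2 : (m : ℝ) ≤ (S \ B).card + (N.filter (fun e => e ⊆ S)).card := by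
      rw [hS] at h1
      exact_mod_cast h1.trans (Nat.add_le_add_left hBc _)
    have h3 := aux_ineq T m hT hm1 hm2
    rw [choose3] at hbad
    have h4 : (1 - d) * ((m : ℝ) * (m - 1) * (m - 2) / 6) ≤ m - T := by
      have h5 := mul_le_mul_of_nonneg_left h3 hq.le
      have h6 := mul_le_mul_of_nonneg_right hqT (show (0:ℝ) ≤ m - T by linarith)
      nlinarith
    linarith
end
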